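/- For q ≥ 3 there exist subspaces V_[1], V_[2] of V_[S], invariant under φ⊗², each carrying an irreducible subrepresentation of φ⊗², with dim V_[1] = (d²−1)·[(d/2)(d/2+1)/2 − 1] and dim V_[2] = (d²−1)·[(d/2)(d/2−1)/2 − 1], such that V_[S] is the orthogonal direct sum V_[adj] ⊕ V_[1] ⊕ V_[2], and V_[adj], V_[1], V_[2] carry pairwise inequivalent subrepresentations. For q = 2 the same holds with V_[2] = 0, i.e. V_[S] = V_[adj] ⊕ V_[1] with V_[1] invariant and irreducible; for q = 1, V_[S] = 0. -/

import Mathlib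

open Matrix MeasureTheory
open scoped Kronecker

noncomputable section

namespace CliffordPaper

/-- The single-qubit Pauli matrices `1, X, Y, Z`. -/
def pauli1 : Fin 4 → Matrix (Fin 2) (Fin 2) ℂ :=
  ![1, !![0, 1; 1, 0], !![0, -Complex.I; Complex.I, 0], !![1, 0; 0, -1]]

/-- Index type for the computational basis of `q` qubits. -/
abbrev Idx (q : ℕ) := Fin q → Fin 2

/-- The space `M_d` of `d × d` complex matrices, `d = 2^q`. -/
abbrev Mat (q : ℕ) := Matrix (Idx q) (Idx q) ℂ

/-- The space `M_d ⊗ M_d`, realized as matrices indexed by the product index set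
(the tensor factors combine via the Kronecker product `⊗ₖ`). -/
abbrev BMat (q : ℕ) := Matrix (Idx q × Idx q) (Idx q × Idx q) ℂ

/-- The `q`-fold Kronecker product of single-qubit Paulis with labels `a`. -/
def PauliOp {q : ℕ} (a : Fin q → Fin 4) : Mat q :=
  Matrix.of fun x y => ∏ i, pauli1 (a i) (x i) (y i)

/-- `√d` as a complex number, where `d = 2^q`. -/
def sqrtd (q : ℕ) : ℂ := (Real.sqrt (2 ^ q) : ℝ)

/-- The set `σ̂_q` of normalized Pauli operators. -/
def sigmaHat (q : ℕ) : Set (Mat q) :=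
  {M | ∃ a : Fin q → Fin 4, M = (sqrtd q)⁻¹ • PauliOp a}

/-- The normalized identity `σ₀ = 1/√d`. -/
def sigma0 (q : ℕ) : Mat q := (sqrtd q)⁻¹ • (1 : Mat q)

/-- `σ_q = σ̂_q \ {σ₀}`. -/
def sigmaSet (q : ℕ) : Set (Mat q) := sigmaHat q \ {sigma0 q}

/-- `N_τ`: the normalized nonidentity Paulis anticommuting with `τ`. -/
def NSet {q : ℕ} (τ : Mat q) : Set (Mat q) :=
  {σ | σ ∈ sigmaSet q ∧ σ * τ + τ * σ = 0}

/-- `C_τ`: the normalized nonidentity Paulis distinct from `τ` commuting with `τ`. -/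
def CSet {q : ℕ} (τ : Mat q) : Set (Mat q) :=
  {σ | σ ∈ sigmaSet q ∧ σ ≠ τ ∧ σ * τ = τ * σ}

/-- `Ĉ_τ`: the normalized Paulis commuting with `τ`. -/
def CHatSet {q : ℕ} (τ : Mat q) : Set (Mat q) :=
  {σ | σ ∈ sigmaHat q ∧ σ * τ = τ * σ}

/-- The normalized product `σ·τ = √d στ`. -/
def nprod {q : ℕ} (σ τ : Mat q) : Mat q := sqrtd q • (σ * τ)

/-- The Clifford normalizer `𝒩_q`: unitaries mapping normalized Paulis to
signed normalized Paulis under conjugation. -/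
def Cliff (q : ℕ) : Set (Mat q) :=
  {U | U ∈ Matrix.unitaryGroup (Idx q) ℂ ∧
    ∀ σ ∈ sigmaHat q, ∃ τ ∈ sigmaHat q, U * σ * Uᴴ = τ ∨ U * σ * Uᴴ = -τ}

/-- The two-copy representation `φ⊗²(U) : A ⊗ B ↦ (UAU†) ⊗ (UBU†)`, extended linearly. -/
def twoCopy {q : ℕ} (U : Mat q) : BMat q →ₗ[ℂ] BMat q where
  toFun M := (U ⊗ₖ U) * M * (U ⊗ₖ U)ᴴ
  map_add' M N := by
    show (U ⊗ₖ U) * (M + N) * (U ⊗ₖ U)ᴴ = (U ⊗ₖ U) * M * (U ⊗ₖ U)ᴴ + (U ⊗ₖ U) * N * (U ⊗ₖ U)ᴴ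
    rw [Matrix.mul_add, Matrix.add_mul]
  map_smul' c M := by
    show (U ⊗ₖ U) * (c • M) * (U ⊗ₖ U)ᴴ = c • ((U ⊗ₖ U) * M * (U ⊗ₖ U)ᴴ)
    rw [Matrix.mul_smul, Matrix.smul_mul]

/-- The Hilbert–Schmidt inner product `⟨A, B⟩ = tr(A† B)`. -/
def hs {q : ℕ} (A B : BMat q) : ℂ := (Aᴴ * B).trace

/-- A subspace is invariant under the two-copy representation of `𝒩_q`. -/
def IsInvariant (q : ℕ) (W : Submodule ℂ (BMat q)) : Prop :=
  ∀ U ∈ Cliff q, ∀ v ∈ W, twoCopy U v ∈ W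

/-- A nonzero invariant subspace carries an irreducible subrepresentation. -/
def CarriesIrred (q : ℕ) (W : Submodule ℂ (BMat q)) : Prop :=
  W ≠ ⊥ ∧ IsInvariant q W ∧ ∀ W' ≤ W, IsInvariant q W' → W' = ⊥ ∨ W' = W

/-- Two invariant subspaces carry equivalent subrepresentations: there is a linear
isomorphism between them intertwining the two-copy representation. -/
def EquivRep (q : ℕ) (W W' : Submodule ℂ (BMat q)) : Prop :=
  ∃ T : BMat q →ₗ[ℂ] BMat q, Submodule.map T W = W' ∧
    (∀ x ∈ W, T x = 0 → x = 0) ∧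
    ∀ U ∈ Cliff q, ∀ x ∈ W, T (twoCopy U x) = twoCopy U (T x)

/-- `S_{σ,τ} = (σ⊗τ + τ⊗σ)/√2`. -/
def SVec {q : ℕ} (σ τ : Mat q) : BMat q :=
  ((Real.sqrt 2 : ℂ))⁻¹ • (σ ⊗ₖ τ + τ ⊗ₖ σ)

/-- `A_{σ,τ} = (σ⊗τ − τ⊗σ)/√2`. -/
def AVec {q : ℕ} (σ τ : Mat q) : BMat q :=
  ((Real.sqrt 2 : ℂ))⁻¹ • (σ ⊗ₖ τ - τ ⊗ₖ σ)

/-- The trivial sector `V_id`. -/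
def Vid (q : ℕ) : Submodule ℂ (BMat q) :=
  Submodule.span ℂ {sigma0 q ⊗ₖ sigma0 q}

/-- The right adjoint sector `V_r`. -/
def Vr (q : ℕ) : Submodule ℂ (BMat q) :=
  Submodule.span ℂ {M | ∃ τ ∈ sigmaSet q, M = sigma0 q ⊗ₖ τ}

/-- The left adjoint sector `V_l`. -/
def Vl (q : ℕ) : Submodule ℂ (BMat q) :=
  Submodule.span ℂ {M | ∃ τ ∈ sigmaSet q, M = τ ⊗ₖ sigma0 q}

/-- The diagonal sector `V_d`. -/
def Vdiag (q : ℕ) : Submodule ℂ (BMat q) :=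
  Submodule.span ℂ {M | ∃ τ ∈ sigmaSet q, M = τ ⊗ₖ τ}

/-- The symmetric commuting sector `V_[S]`. -/
def VScom (q : ℕ) : Submodule ℂ (BMat q) :=
  Submodule.span ℂ {M | ∃ τ ∈ sigmaSet q, ∃ σ ∈ CSet τ, M = SVec σ τ}

/-- The symmetric anti-commuting sector `V_{S}`. -/
def VSanti (q : ℕ) : Submodule ℂ (BMat q) :=
  Submodule.span ℂ {M | ∃ τ ∈ sigmaSet q, ∃ σ ∈ NSet τ, M = SVec σ τ}

/-- The antisymmetric commuting sector `V_[A]`. -/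
def VAcom (q : ℕ) : Submodule ℂ (BMat q) :=
  Submodule.span ℂ {M | ∃ τ ∈ sigmaSet q, ∃ σ ∈ CSet τ, M = AVec σ τ}

/-- The antisymmetric anti-commuting sector `V_{A}`. -/
def VAanti (q : ℕ) : Submodule ℂ (BMat q) :=
  Submodule.span ℂ {M | ∃ τ ∈ sigmaSet q, ∃ σ ∈ NSet τ, M = AVec σ τ}

/-- `V_[A]` presented with the spanning vectors `A_{σ,σ·τ}`, `σ ∈ C_τ`. -/
def VAcom' (q : ℕ) : Submodule ℂ (BMat q) :=
  Submodule.span ℂ {M | ∃ τ ∈ sigmaSet q, ∃ σ ∈ CSet τ, M = AVec σ (nprod σ τ)}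

/-- `V_0 = span{Σ_{σ∈σ_q} σ⊗σ}`. -/
def V0diag (q : ℕ) : Submodule ℂ (BMat q) :=
  Submodule.span ℂ {∑ᶠ σ ∈ sigmaSet q, σ ⊗ₖ σ}

/-- `V_1`, the "positive" part of the diagonal sector. -/
def V1diag (q : ℕ) : Submodule ℂ (BMat q) :=
  Submodule.span ℂ {v | ∃ lam : Mat q → ℂ,
    v = ∑ᶠ σ ∈ sigmaSet q, lam σ • (σ ⊗ₖ σ) ∧
    (∑ᶠ σ ∈ sigmaSet q, lam σ) = 0 ∧
    ∀ τ ∈ sigmaSet q, (∑ᶠ σ ∈ NSet τ, lam σ) = -((2 ^ q : ℂ) / 2) * lam τ}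

/-- `V_2`, the "negative" part of the diagonal sector. -/
def V2diag (q : ℕ) : Submodule ℂ (BMat q) :=
  Submodule.span ℂ {v | ∃ lam : Mat q → ℂ,
    v = ∑ᶠ σ ∈ sigmaSet q, lam σ • (σ ⊗ₖ σ) ∧
    (∑ᶠ σ ∈ sigmaSet q, lam σ) = 0 ∧
    ∀ τ ∈ sigmaSet q, (∑ᶠ σ ∈ NSet τ, lam σ) = ((2 ^ q : ℂ) / 2) * lam τ}

/-- `v^[adj]_τ = (2|C_τ|)^{-1/2} Σ_{σ∈C_τ} S_{σ,σ·τ}`. -/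
def vadjS {q : ℕ} (τ : Mat q) : BMat q :=
  ((Real.sqrt (2 * ((CSet τ).ncard : ℝ)) : ℂ))⁻¹ • ∑ᶠ σ ∈ CSet τ, SVec σ (nprod σ τ)

/-- `v^{adj}_τ = (2|N_τ|)^{-1/2} Σ_{σ∈N_τ} A_{σ,iσ·τ}`. -/
def vadjA {q : ℕ} (τ : Mat q) : BMat q :=
  ((Real.sqrt (2 * ((NSet τ).ncard : ℝ)) : ℂ))⁻¹ •
    ∑ᶠ σ ∈ NSet τ, AVec σ (Complex.I • nprod σ τ)

/-- The symmetric adjoint sector `V_[adj]`. -/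
def VadjS (q : ℕ) : Submodule ℂ (BMat q) :=
  Submodule.span ℂ {M | ∃ τ ∈ sigmaSet q, M = vadjS τ}

/-- The antisymmetric adjoint sector `V_{adj}`. -/
def VadjA (q : ℕ) : Submodule ℂ (BMat q) :=
  Submodule.span ℂ {M | ∃ τ ∈ sigmaSet q, M = vadjA τ}

/-- The orthogonal complement `V^⊥_{adj}` of `V_{adj}` inside `V_{A}`. -/
def VadjAperp (q : ℕ) : Submodule ℂ (BMat q) :=
  Submodule.span ℂ {v | v ∈ VAanti q ∧ ∀ w ∈ VadjA q, hs w v = 0}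

/-- `V_{1}^τ`. -/
def V1symτ (q : ℕ) (τ : Mat q) : Submodule ℂ (BMat q) :=
  Submodule.span ℂ {v | ∃ lam : Mat q → ℂ,
    v = ∑ᶠ σ ∈ NSet τ, lam σ • SVec σ (Complex.I • nprod σ τ) ∧
    ∀ ν ∈ NSet τ, (∑ᶠ σ ∈ NSet τ ∩ CSet ν, lam σ) - (∑ᶠ σ ∈ NSet τ ∩ NSet ν, lam σ)
      = ((2 ^ q : ℂ) / 2) * lam ν}

/-- `V_{2}^τ`. -/
def V2symτ (q : ℕ) (τ : Mat q) : Submodule ℂ (BMat q) :=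
  Submodule.span ℂ {v | ∃ lam : Mat q → ℂ,
    v = ∑ᶠ σ ∈ NSet τ, lam σ • SVec σ (Complex.I • nprod σ τ) ∧
    ∀ ν ∈ NSet τ, (∑ᶠ σ ∈ NSet τ ∩ CSet ν, lam σ) - (∑ᶠ σ ∈ NSet τ ∩ NSet ν, lam σ)
      = -((2 ^ q : ℂ) / 2) * lam ν}

/-- `V_{1} = ⊕_τ V_{1}^τ`. -/
def V1sym (q : ℕ) : Submodule ℂ (BMat q) := ⨆ τ ∈ sigmaSet q, V1symτ q τ

/-- `V_{2} = ⊕_τ V_{2}^τ`. -/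
def V2sym (q : ℕ) : Submodule ℂ (BMat q) := ⨆ τ ∈ sigmaSet q, V2symτ q τ

/-- The defining property of the map `Θ` on `V_[A]`. -/
def ThetaProp (q : ℕ) (Θ : BMat q →ₗ[ℂ] BMat q) : Prop :=
  ∀ τ ∈ sigmaSet q, ∀ σ ∈ CSet τ,
    Θ (AVec σ (nprod σ τ)) =
      (∑ᶠ σ' ∈ NSet τ ∩ CSet σ, AVec σ' (Complex.I • nprod σ' τ)) -
      ∑ᶠ σ' ∈ NSet τ ∩ NSet σ, AVec σ' (Complex.I • nprod σ' τ)

/-- `V` = span of off-diagonal products `σ⊗σ̂`, `σ ≠ σ̂`. -/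
def Voff (q : ℕ) : Submodule ℂ (BMat q) :=
  Submodule.span ℂ {M | ∃ σ ∈ sigmaSet q, ∃ σ' ∈ sigmaSet q, σ ≠ σ' ∧ M = σ ⊗ₖ σ'}

/-- `V^τ` = span of the `σ⊗σ̂` with `σ·σ̂ ∈ {τ, −τ, iτ, −iτ}`. -/
def Vtau (q : ℕ) (τ : Mat q) : Submodule ℂ (BMat q) :=
  Submodule.span ℂ {M | ∃ σ ∈ sigmaSet q, ∃ σ' ∈ sigmaSet q,
    (nprod σ σ' = τ ∨ nprod σ σ' = -τ ∨ nprod σ σ' = Complex.I • τ ∨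
      nprod σ σ' = -(Complex.I • τ)) ∧ M = σ ⊗ₖ σ'}

/-!
Up to a phase, the Pauli operators are labelled by the symplectic space `V = 𝔽₂^{2q}`, of
cardinality `d²`: labels add under multiplication, and two Pauli operators commute exactly when
their labels are orthogonal. Apart from the coincidences `S_{σ,σ·τ} = S_{σ·τ,σ}`, the vectors
`S_{σ,σ·τ}` with `σ ∈ C_τ` form an orthonormal basis of `V_[S]`, split into blocks indexed by `τ`.

Conjugation by the Pauli operator `a` multiplies the block of `τ` by `(-1)^{B(a,τ)}`, so every
operator commuting with the representation preserves the blocks. The rotations `(1 + i P) / √2` act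
on the labels by transvections, so the matrix entries of such an operator are invariant under the
group that the transvections generate. By Witt's theorem they depend only on the linear relations
and symplectic products among `τ, σ, ν`. On `V_[S]` the operator is therefore a combination of the
identity, the block sum `J` (all entries `1`) and the Hadamard operator `H` (entries
`(-1)^{B(ν,σ)}`).

Orthogonality of characters gives `H J = -2 J` and `H² = d² - 2 J`. Hence the commutant on `V_[S]`
is generated by `H`, whose possible eigenvalues are `-2`, `d` and `-d`; the first eigenspace is
`V_[adj]` and the other two are `V_[1]` and `V_[2]`. Since the commutant consists of polynomials in
the symmetric operator `H`, its eigenspaces are orthogonal, irreducible and pairwise inequivalent,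
and their dimensions are read off from the traces of the three operators.
-/

section Symplectic

variable {K V : Type*} [Field K] [AddCommGroup V] [Module K V] {B : LinearMap.BilinForm K V}

/-- The symplectic transvection `x ↦ x + c B(a, x) a` of an alternating form `B`. -/
def symplecticTransvection (hB : B.IsAlt) (a : V) (c : K) : V ≃ₗ[K] V :=
  LinearEquiv.transvection (f := c • B a) (v := a) (by simp [hB a])

@[simp]
lemma symplecticTransvection_apply (hB : B.IsAlt) (a : V) (c : K) (x : V) :
    symplecticTransvection hB a c x = x + (c * B a x) • a := rfl

/-- The subgroup of `GL(V)` generated by the symplectic transvections of an alternating form. -/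
def transvectionGroup (hB : B.IsAlt) : Subgroup (V ≃ₗ[K] V) :=
  Subgroup.closure (Set.range fun ac : V × K => symplecticTransvection hB ac.1 ac.2)

lemma symplecticTransvection_mem (hB : B.IsAlt) (a : V) (c : K) :
    symplecticTransvection hB a c ∈ transvectionGroup hB :=
  Subgroup.subset_closure ⟨(a, c), rfl⟩

lemma form_apply_apply_of_mem_transvectionGroup (hB : B.IsAlt) {g : V ≃ₗ[K] V}
    (hg : g ∈ transvectionGroup hB) (x y : V) : B (g x) (g y) = B x y := by
  induction hg using Subgroup.closure_induction generalizing x y with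
  | mem _ hg =>
    obtain ⟨⟨a, c⟩, rfl⟩ := hg
    simp only [symplecticTransvection_apply, map_add, map_smul, LinearMap.add_apply,
      LinearMap.smul_apply, smul_eq_mul, hB a, ← hB.neg_eq a x]
    ring
  | one => rfl
  | mul g h _ _ ihg ihh => rw [LinearEquiv.mul_apply, LinearEquiv.mul_apply, ihg, ihh]
  | inv g _ ih =>
    rw [← ih, ← LinearEquiv.mul_apply, ← LinearEquiv.mul_apply, mul_inv_cancel]
    rfl

lemma exists_transvection_apply_eq_of_form_ne_zero (hB : B.IsAlt) {W : Submodule K V} {v w : V}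
    (hW : ∀ x ∈ W, B v x = B w x) (hvw : B v w ≠ 0) :
    ∃ g ∈ transvectionGroup hB, (∀ x ∈ W, g x = x) ∧ g v = w := by
  have hwv : B w v ≠ 0 := by rwa [← hB.neg_eq, neg_ne_zero]
  refine ⟨_, symplecticTransvection_mem hB (w - v) (B w v)⁻¹, fun x hx => ?_, ?_⟩
  · simp [hW x hx]
  · simp [hB v, hwv]

lemma exists_dual_le_ker_ne_zero_ne_zero {W : Submodule K V} {v w : V} (hv : v ∉ W) (hw : w ∉ W) :
    ∃ f : Module.Dual K V, W ≤ LinearMap.ker f ∧ f v ≠ 0 ∧ f w ≠ 0 := by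
  obtain ⟨f₁, hf₁v, hf₁⟩ := Submodule.exists_le_ker_of_notMem hv
  obtain ⟨f₂, hf₂w, hf₂⟩ := Submodule.exists_le_ker_of_notMem hw
  by_cases h₁ : f₁ w = 0
  · by_cases h₂ : f₂ v = 0
    · refine ⟨f₁ + f₂, fun x hx => ?_, by simpa [h₂], by simpa [h₁]⟩
      simp [LinearMap.mem_ker.1 (hf₁ hx), LinearMap.mem_ker.1 (hf₂ hx)]
    · exact ⟨f₂, hf₂, h₂, hf₂w⟩
  · exact ⟨f₁, hf₁, hf₁v, h₁⟩

variable [FiniteDimensional K V]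

lemma exists_mem_transvectionGroup_apply_eq (hB : B.IsAlt) (hN : B.Nondegenerate)
    {W : Submodule K V} {v w : V} (hv : v ∉ W) (hw : w ∉ W) (hW : ∀ x ∈ W, B v x = B w x) :
    ∃ g ∈ transvectionGroup hB, (∀ x ∈ W, g x = x) ∧ g v = w := by
  by_cases hvw : B v w = 0
  · obtain ⟨f, hfW, hfv, hfw⟩ := exists_dual_le_ker_ne_zero_ne_zero hv hw
    obtain ⟨z, hz⟩ : ∃ z, ∀ x, B z x = f x :=
      ⟨(B.toDual hN).symm f, fun x => LinearMap.BilinForm.apply_toDual_symm_apply f x⟩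
    have hfW' (x) (hx : x ∈ W) : f x = 0 := hfW hx
    have hzv : B v z ≠ 0 := by rwa [← hB.neg_eq, hz, neg_ne_zero]
    -- Neither `v` nor `w` is orthogonal to `v + z`, so two transvections lead from `v` to `w`.
    obtain ⟨g, hg, hgW, hgv⟩ :=
      exists_transvection_apply_eq_of_form_ne_zero hB (W := W) (v := v) (w := v + z)
        (fun x hx => by simp [hz, hfW' x hx]) (by simpa [hB v])
    obtain ⟨h, hh, hhW, hhv⟩ :=
      exists_transvection_apply_eq_of_form_ne_zero hB (W := W) (v := v + z) (w := w)
        (fun x hx => by simp [hz, hfW' x hx, hW x hx]) (by simpa [hvw, hz])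
    exact ⟨h * g, mul_mem hh hg, fun x hx => by simp [hgW x hx, hhW x hx], by simp [hgv, hhv]⟩
  · exact exists_transvection_apply_eq_of_form_ne_zero hB hW hvw

/-- **Witt's extension theorem** for nondegenerate alternating forms. -/
theorem exists_mem_transvectionGroup_forall_apply_eq (hB : B.IsAlt) (hN : B.Nondegenerate) :
    ∀ {n : ℕ} {v w : Fin n → V}, LinearIndependent K v → LinearIndependent K w →
      (∀ i j, B (v i) (v j) = B (w i) (w j)) →
      ∃ g ∈ transvectionGroup hB, ∀ i, g (v i) = w i
  | 0, _, _, _, _, _ => ⟨1, one_mem _, fun i => i.elim0⟩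
  | n + 1, v, w, hv, hw, hvw => by
    rw [linearIndependent_finSucc'] at hv hw
    obtain ⟨g, hg, hgv⟩ := exists_mem_transvectionGroup_forall_apply_eq hB hN hv.1 hw.1
      fun i j => hvw i.castSucc j.castSucc
    let W := Submodule.span K (Set.range (Fin.init w))
    have hmap : (Submodule.span K (Set.range (Fin.init v))).map g.toLinearMap = W := by
      rw [Submodule.map_span, ← Set.range_comp]
      exact congrArg _ (congrArg _ (funext hgv))
    have hgW : g (v (Fin.last n)) ∉ W := by
      rw [← hmap]
      rintro ⟨x, hx, hxv⟩
      exact hv.2 (g.injective hxv ▸ hx)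
    have hform (x) (hx : x ∈ W) : B (g (v (Fin.last n))) x = B (w (Fin.last n)) x := by
      refine LinearMap.eqOn_span (fun y hy => ?_) hx
      obtain ⟨i, rfl⟩ := hy
      rw [← hgv, form_apply_apply_of_mem_transvectionGroup hB hg, hgv]
      exact hvw _ _
    obtain ⟨h, hh, hhW, hhv⟩ := exists_mem_transvectionGroup_apply_eq hB hN hgW hw.2 hform
    refine ⟨h * g, mul_mem hh hg, Fin.lastCases hhv fun i => ?_⟩
    rw [LinearEquiv.mul_apply, show g (v i.castSucc) = _ from hgv i]
    exact hhW _ (Submodule.subset_span ⟨i, rfl⟩)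

theorem exists_eq_const_of_gram_eq (hB : B.IsAlt) (hN : B.Nondegenerate) {α : Type*} [Nonempty α]
    {n : ℕ} {F : (Fin n → V) → α} (hF : ∀ g ∈ transvectionGroup hB, ∀ v, F (g ∘ v) = F v)
    (M : Matrix (Fin n) (Fin n) K) :
    ∃ c, ∀ v, LinearIndependent K v → (∀ i j, B (v i) (v j) = M i j) → F v = c := by
  by_cases h : ∃ w, LinearIndependent K w ∧ ∀ i j, B (w i) (w j) = M i j
  · obtain ⟨w, hw, hwM⟩ := h
    refine ⟨F w, fun v hv hvM => ?_⟩
    obtain ⟨g, hg, hgv⟩ := exists_mem_transvectionGroup_forall_apply_eq hB hN hv hw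
      fun i j => (hvM i j).trans (hwM i j).symm
    rw [← hF g hg v, show g ∘ v = w from funext hgv]
  · exact ⟨Classical.arbitrary α, fun v hv hvM => absurd ⟨v, hv, hvM⟩ h⟩

end Symplectic

section BinarySymplectic

lemma zmod_two_eq_zero_or_eq_one (x : ZMod 2) : x = 0 ∨ x = 1 := by
  decide +revert

/-- The sign character `x ↦ (-1)^x` of `𝔽₂`. -/
def signChar : AddChar (ZMod 2) ℂ := AddChar.zmodChar 2 (ζ := -1) (by norm_num)

@[simp]
lemma signChar_one : signChar 1 = -1 := by
  simp [signChar, AddChar.zmodChar_apply, ZMod.val_one]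

lemma signChar_mul_self (x : ZMod 2) : signChar x * signChar x = 1 := by
  rw [← AddChar.map_add_eq_mul, ZModModule.add_self, AddChar.map_zero_eq_one]

lemma signChar_eq_ite (x : ZMod 2) : signChar x = if x = 0 then 1 else -1 := by
  obtain rfl | rfl := zmod_two_eq_zero_or_eq_one x
  · simp
  · simp

lemma signChar_eq_one_iff {x : ZMod 2} : signChar x = 1 ↔ x = 0 := by
  rw [signChar_eq_ite]
  split_ifs with h
  · simp [h]
  · norm_num [h]

lemma star_signChar (x : ZMod 2) : star (signChar x) = signChar x := by
  rw [signChar_eq_ite]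
  split_ifs <;> simp

variable {V : Type*} [AddCommGroup V] [Module (ZMod 2) V]

lemma add_eq_zero_iff_eq_of_zmod_two {x y : V} : x + y = 0 ↔ x = y := by
  rw [add_eq_zero_iff_eq_neg, ZModModule.neg_eq_self]

section LinearIndependence

variable {τ σ ν : V}

lemma linearIndependent_pair_zmod_two (hτ : τ ≠ 0) (hσ : σ ≠ 0) (hστ : σ ≠ τ) :
    LinearIndependent (ZMod 2) ![τ, σ] := by
  rw [LinearIndependent.pair_iff]
  intro a b
  obtain rfl | rfl := zmod_two_eq_zero_or_eq_one a <;>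
    obtain rfl | rfl := zmod_two_eq_zero_or_eq_one b <;>
    simp_all [add_eq_zero_iff_eq_of_zmod_two, eq_comm]

lemma linearIndependent_triple_zmod_two (hτ : τ ≠ 0) (hσ : σ ≠ 0) (hστ : σ ≠ τ) (hν : ν ≠ 0)
    (hντ : ν ≠ τ) (hνσ : ν ≠ σ) (hνστ : ν ≠ σ + τ) :
    LinearIndependent (ZMod 2) ![τ, σ, ν] := by
  rw [Fintype.linearIndependent_iff]
  intro g hg
  simp only [Fin.sum_univ_three, Matrix.cons_val] at hg
  rw [Fin.forall_fin_succ, Fin.forall_fin_two]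
  change g 0 = 0 ∧ g 1 = 0 ∧ g 2 = 0
  generalize g 0 = a at *
  generalize g 1 = b at *
  generalize g 2 = c at *
  obtain rfl | rfl := zmod_two_eq_zero_or_eq_one a <;>
    obtain rfl | rfl := zmod_two_eq_zero_or_eq_one b <;>
    obtain rfl | rfl := zmod_two_eq_zero_or_eq_one c <;>
    simp_all [add_eq_zero_iff_eq_of_zmod_two, eq_comm, add_comm]

end LinearIndependence

variable {B : LinearMap.BilinForm (ZMod 2) V}

lemma form_comm (hB : B.IsAlt) (x y : V) : B x y = B y x := by
  rw [← hB.neg_eq x y, ZMod.neg_eq_self_mod_two]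

variable [Fintype V]

lemma sum_signChar_form (hN : B.Nondegenerate) [DecidableEq V] (x : V) :
    ∑ ν, signChar (B ν x) = if x = 0 then (Fintype.card V : ℂ) else 0 := by
  classical
  let ψ : AddChar V ℂ := signChar.compAddMonoidHom (B.flip x).toAddMonoidHom
  have hψ : ψ = 0 ↔ x = 0 := by
    refine ⟨fun h => hN.2 x fun y => ?_, ?_⟩
    · exact signChar_eq_one_iff.1 (DFunLike.congr_fun h y)
    · rintro rfl
      ext y
      simp [ψ]
  have h := AddChar.sum_eq_ite ψ
  simp only [hψ] at h
  exact h

variable [DecidableEq V]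

variable (B) in
/-- The labels of the set `C_τ`: the vectors outside `{0, τ}` that are orthogonal to `τ ≠ 0`. -/
def commSet (τ : V) : Finset V := {σ | τ ≠ 0 ∧ σ ≠ 0 ∧ σ ≠ τ ∧ B σ τ = 0}

lemma mem_commSet {τ σ : V} : σ ∈ commSet B τ ↔ τ ≠ 0 ∧ σ ≠ 0 ∧ σ ≠ τ ∧ B σ τ = 0 := by
  simp [commSet]

lemma add_mem_commSet (hB : B.IsAlt) {τ σ : V} (h : σ ∈ commSet B τ) : σ + τ ∈ commSet B τ := by
  obtain ⟨hτ, hσ, hστ, h0⟩ := mem_commSet.1 h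
  refine mem_commSet.2 ⟨hτ, fun h => hστ ?_, fun h => hσ ?_, by simp [h0, hB τ]⟩
  · exact add_eq_zero_iff_eq_of_zmod_two.1 h
  · simpa using h

lemma sum_commSet_ite_pair (hB : B.IsAlt) {τ σ : V} (hσ : σ ∈ commSet B τ) (f : V → ℂ) :
    ∑ ν ∈ commSet B τ, (if ν = σ ∨ ν = σ + τ then f ν else 0) = f σ + f (σ + τ) := by
  have hne : σ ≠ σ + τ := by simpa [eq_comm] using (mem_commSet.1 hσ).1
  have hset : (commSet B τ).filter (fun ν => ν = σ ∨ ν = σ + τ) = {σ, σ + τ} := by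
    ext ν
    simp only [Finset.mem_filter, Finset.mem_insert, Finset.mem_singleton, and_iff_right_iff_imp]
    rintro (rfl | rfl)
    · exact hσ
    · exact add_mem_commSet hB hσ
  rw [← Finset.sum_filter, hset, Finset.sum_pair hne]

lemma sum_commSet (hB : B.IsAlt) {τ : V} (hτ : τ ≠ 0) (f : V → ℂ) :
    ∑ ν ∈ commSet B τ, f ν = (∑ ν, f ν + ∑ ν, signChar (B ν τ) * f ν) / 2 - f 0 - f τ := by
  have hset : commSet B τ = ((Finset.univ.filter fun ν => B ν τ = 0).erase 0).erase τ := by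
    ext ν
    simp only [mem_commSet, Finset.mem_erase, Finset.mem_filter, Finset.mem_univ, true_and]
    tauto
  have hhalf (ν : V) : (if B ν τ = 0 then f ν else 0) = (f ν + signChar (B ν τ) * f ν) / 2 := by
    rw [signChar_eq_ite]
    split_ifs <;> ring
  rw [hset, Finset.sum_erase_eq_sub (by simp [hτ, hB τ]), Finset.sum_erase_eq_sub (by simp),
    Finset.sum_filter, Finset.sum_congr rfl fun ν _ => hhalf ν, ← Finset.sum_div,
    Finset.sum_add_distrib]

lemma sum_commSet_signChar (hB : B.IsAlt) (hN : B.Nondegenerate) {τ : V} (hτ : τ ≠ 0) (x : V) :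
    ∑ ν ∈ commSet B τ, signChar (B ν x) =
      (if x = 0 ∨ x = τ then (Fintype.card V : ℂ) / 2 else 0) - 1 - signChar (B τ x) := by
  have hτx : τ + x = 0 ↔ x = τ := add_eq_zero_iff_eq_of_zmod_two.trans eq_comm
  simp only [sum_commSet hB hτ, ← AddChar.map_add_eq_mul, ← map_add, sum_signChar_form hN, hτx,
    map_zero, LinearMap.zero_apply, AddChar.map_zero_eq_one]
  by_cases h0 : x = 0
  · simp [h0, hτ.symm]
  · by_cases h1 : x = τ <;> simp [h0, h1, hτ]

lemma card_commSet (hB : B.IsAlt) (hN : B.Nondegenerate) {τ : V} (hτ : τ ≠ 0) :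
    ((commSet B τ).card : ℂ) = Fintype.card V / 2 - 2 := by
  have h := sum_commSet_signChar hB hN hτ 0
  simp only [map_zero, AddChar.map_zero_eq_one, Finset.sum_const, nsmul_eq_mul, mul_one, true_or,
    if_true] at h
  rw [h]
  ring

lemma sum_card_commSet (hB : B.IsAlt) (hN : B.Nondegenerate) :
    ∑ τ, ((commSet B τ).card : ℂ) = (Fintype.card V - 1) * (Fintype.card V / 2 - 2) := by
  have h0 : commSet B 0 = ∅ := by simp [commSet]
  rw [← Finset.add_sum_erase _ _ (Finset.mem_univ 0), h0,
    Finset.sum_congr rfl fun τ hτ => card_commSet hB hN (Finset.ne_of_mem_erase hτ)]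
  rw [Finset.card_empty, Nat.cast_zero, zero_add, Finset.sum_const, nsmul_eq_mul,
    Finset.cast_card_erase_of_mem (Finset.mem_univ 0), Finset.card_univ]

lemma sum_signChar_of_mem_commSet (hB : B.IsAlt) (hN : B.Nondegenerate) {τ σ : V}
    (hσ : σ ∈ commSet B τ) : ∑ ν ∈ commSet B τ, signChar (B ν σ) = -2 := by
  obtain ⟨hτ, hσ0, hστ, h0⟩ := mem_commSet.1 hσ
  rw [sum_commSet_signChar hB hN hτ, if_neg (by tauto), form_comm hB, h0, AddChar.map_zero_eq_one]
  norm_num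

lemma sum_signChar_mul_signChar_of_mem_commSet (hB : B.IsAlt) (hN : B.Nondegenerate) {τ σ ρ : V}
    (hσ : σ ∈ commSet B τ) (hρ : ρ ∈ commSet B τ) :
    ∑ ν ∈ commSet B τ, signChar (B ν σ) * signChar (B ρ ν) =
      (if ρ = σ ∨ ρ = σ + τ then (Fintype.card V : ℂ) / 2 else 0) - 2 := by
  obtain ⟨hτ, -, -, hσ0⟩ := mem_commSet.1 hσ
  obtain ⟨-, -, -, hρ0⟩ := mem_commSet.1 hρ
  have hsum (ν : V) : signChar (B ν σ) * signChar (B ρ ν) = signChar (B ν (ρ + σ)) := by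
    rw [form_comm hB ρ, ← AddChar.map_add_eq_mul, ← map_add, add_comm]
  have hcond : (ρ + σ = 0 ∨ ρ + σ = τ) ↔ (ρ = σ ∨ ρ = σ + τ) := by
    rw [add_eq_zero_iff_eq_of_zmod_two, ← eq_sub_iff_add_eq, ZModModule.sub_eq_add, add_comm τ]
  simp only [hsum, sum_commSet_signChar hB hN hτ, hcond]
  rw [form_comm hB τ, map_add, LinearMap.add_apply, hσ0, hρ0, add_zero, AddChar.map_zero_eq_one]
  ring

theorem exists_invariant_kernel_eq (hB : B.IsAlt) (hN : B.Nondegenerate) {k : V → V → V → ℂ}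
    (hk : ∀ g ∈ transvectionGroup hB, ∀ τ σ ν, k (g τ) (g σ) (g ν) = k τ σ ν)
    (hadd : ∀ τ, ∀ σ ∈ commSet B τ, ∀ ν ∈ commSet B τ, k τ σ (ν + τ) = k τ σ ν) :
    ∃ α β γ : ℂ, ∀ τ, ∀ σ ∈ commSet B τ, ∀ ν ∈ commSet B τ,
      k τ σ ν = (if ν = σ ∨ ν = σ + τ then α else 0) + β + γ * signChar (B ν σ) := by
  obtain ⟨c₀, hc₀⟩ := exists_eq_const_of_gram_eq hB hN
    (F := fun v : Fin 2 → V => k (v 0) (v 1) (v 1)) (fun g hg v => hk g hg _ _ _) 0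
  have hc (b : ZMod 2) := exists_eq_const_of_gram_eq hB hN
    (F := fun v : Fin 3 → V => k (v 0) (v 1) (v 2)) (fun g hg v => hk g hg _ _ _)
    !![0, 0, 0; 0, 0, b; 0, b, 0]
  choose c hc using hc
  refine ⟨c₀ - c 0, (c 0 + c 1) / 2, (c 0 - c 1) / 2, fun τ σ hσ ν hν => ?_⟩
  obtain ⟨hτ0, hσ0, hστ, hBσ⟩ := mem_commSet.1 hσ
  obtain ⟨-, hν0, hντ, hBν⟩ := mem_commSet.1 hν
  have hdiag : k τ σ σ = c₀ := by
    refine hc₀ ![τ, σ] (linearIndependent_pair_zmod_two hτ0 hσ0 hστ) ?_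
    simp [Fin.forall_fin_two, hB τ, hB σ, hBσ, form_comm hB τ]
  split_ifs with h
  · have hkν : k τ σ ν = k τ σ σ := by
      obtain rfl | rfl := h
      · rfl
      · exact hadd τ σ hσ σ hσ
    have hBνσ : B ν σ = 0 := by
      obtain rfl | rfl := h
      · exact hB ν
      · simp [hB σ, form_comm hB τ, hBσ]
    rw [hkν, hdiag, hBνσ, AddChar.map_zero_eq_one]
    ring
  · rw [not_or] at h
    have hgen : k τ σ ν = c (B ν σ) := by
      refine hc _ ![τ, σ, ν]
        (linearIndependent_triple_zmod_two hτ0 hσ0 hστ hν0 hντ h.1 h.2) ?_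
      simp [Fin.forall_fin_succ, hB τ, hB σ, hB ν, hBσ, hBν, form_comm hB τ, form_comm hB σ ν]
    rw [hgen]
    obtain h | h := zmod_two_eq_zero_or_eq_one (B ν σ)
    · rw [h, AddChar.map_zero_eq_one]
      ring
    · rw [h, signChar_one]
      ring

end BinarySymplectic

section PairFrame

open scoped InnerProductSpace

variable {V : Type*} [AddCommGroup V] [Module (ZMod 2) V] [Fintype V] [DecidableEq V]

/-- A family of unit vectors `vec τ σ`, `σ ∈ C_τ`, that are pairwise orthogonal except for the
coincidences `vec τ (σ + τ) = vec τ σ`. It abstracts the family `S_{σ,σ·τ}`, in which `σ` and `σ·τ`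
are interchangeable. Nothing is required of `vec τ σ` for `σ ∉ C_τ`. -/
structure PairFrame (B : LinearMap.BilinForm (ZMod 2) V) (E : Type*) [NormedAddCommGroup E]
    [InnerProductSpace ℂ E] where
  vec : V → V → E
  vec_add : ∀ τ, ∀ σ ∈ commSet B τ, vec τ (σ + τ) = vec τ σ
  inner_vec : ∀ τ, ∀ σ ∈ commSet B τ, ∀ τ', ∀ σ' ∈ commSet B τ',
    ⟪vec τ σ, vec τ' σ'⟫_ℂ = if τ = τ' ∧ (σ' = σ ∨ σ' = σ + τ) then 1 else 0

variable {B : LinearMap.BilinForm (ZMod 2) V} {E : Type*} [NormedAddCommGroup E]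
  [InnerProductSpace ℂ E]

namespace PairFrame

variable (F : PairFrame B E)

/-- The span of a pair frame. -/
def sector : Submodule ℂ E := Submodule.span ℂ {x | ∃ τ, ∃ σ ∈ commSet B τ, x = F.vec τ σ}

/-- The vector of the sector with coefficients `f`; the factor `1/2` compensates for each frame
vector being listed twice. -/
def synth (f : V → V → ℂ) : E := (1 / 2 : ℂ) • ∑ τ, ∑ σ ∈ commSet B τ, f τ σ • F.vec τ σ

/-- The operator that acts on the `τ`-block of frame coordinates by the kernel `k τ`. -/
def kernelOp (k : V → V → V → ℂ) : E →ₗ[ℂ] E :=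
  (1 / 2 : ℂ) • ∑ τ, ∑ σ ∈ commSet B τ, ∑ ν ∈ commSet B τ,
    k τ σ ν • (innerₛₗ ℂ (F.vec τ ν)).smulRight (F.vec τ σ)

variable {F}

lemma vec_mem_sector {τ σ : V} (hσ : σ ∈ commSet B τ) : F.vec τ σ ∈ F.sector :=
  Submodule.subset_span ⟨τ, σ, hσ, rfl⟩

lemma synth_mem_sector (f : V → V → ℂ) : F.synth f ∈ F.sector :=
  Submodule.smul_mem _ _ <| Submodule.sum_mem _ fun _ _ => Submodule.sum_mem _ fun _ hσ =>
    Submodule.smul_mem _ _ (vec_mem_sector hσ)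

lemma kernelOp_apply (k : V → V → V → ℂ) (x : E) :
    F.kernelOp k x = F.synth fun τ σ => ∑ ν ∈ commSet B τ, k τ σ ν * ⟪F.vec τ ν, x⟫_ℂ := by
  simp [kernelOp, synth, LinearMap.sum_apply, Finset.sum_smul, mul_smul]

lemma kernelOp_mem_sector (k : V → V → V → ℂ) (x : E) : F.kernelOp k x ∈ F.sector :=
  kernelOp_apply (F := F) k x ▸ synth_mem_sector _

lemma inner_vec_comm {τ σ τ' σ' : V} (hσ : σ ∈ commSet B τ) (hσ' : σ' ∈ commSet B τ') :
    ⟪F.vec τ σ, F.vec τ' σ'⟫_ℂ = ⟪F.vec τ' σ', F.vec τ σ⟫_ℂ := by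
  rw [← inner_conj_symm, F.inner_vec τ' σ' hσ' τ σ hσ]
  split_ifs <;> simp

lemma sum_mul_inner_vec (hB : B.IsAlt) {τ τ' σ : V} (hσ : σ ∈ commSet B τ') (f : V → ℂ) :
    ∑ ν ∈ commSet B τ, f ν * ⟪F.vec τ ν, F.vec τ' σ⟫_ℂ =
      if τ = τ' then f σ + f (σ + τ) else 0 := by
  rw [Finset.sum_congr rfl fun ν hν => by
    rw [inner_vec_comm hν hσ, F.inner_vec τ' σ hσ τ ν hν]]
  split_ifs with h
  · subst h
    simp [sum_commSet_ite_pair hB hσ]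
  · simp [Ne.symm h]

lemma inner_vec_synth (hB : B.IsAlt) (f : V → V → ℂ) {τ σ : V} (hσ : σ ∈ commSet B τ) :
    ⟪F.vec τ σ, F.synth f⟫_ℂ = (f τ σ + f τ (σ + τ)) / 2 := by
  have hblock (τ' : V) : ∑ σ' ∈ commSet B τ', f τ' σ' * ⟪F.vec τ σ, F.vec τ' σ'⟫_ℂ =
      if τ' = τ then f τ' σ + f τ' (σ + τ') else 0 := by
    rw [← sum_mul_inner_vec (F := F) hB hσ]
    exact Finset.sum_congr rfl fun σ' hσ' => by rw [inner_vec_comm hσ hσ']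
  simp only [synth, inner_smul_right, inner_sum, hblock, Finset.sum_ite_eq', Finset.mem_univ,
    if_true]
  ring

lemma eq_of_forall_inner_vec_eq {x y : E} (hx : x ∈ F.sector) (hy : y ∈ F.sector)
    (h : ∀ τ, ∀ σ ∈ commSet B τ, ⟪F.vec τ σ, x⟫_ℂ = ⟪F.vec τ σ, y⟫_ℂ) : x = y := by
  have horth : x - y ∈ F.sectorᗮ := by
    rw [sector, Submodule.mem_orthogonal]
    intro u hu
    induction hu using Submodule.span_induction with
    | mem _ hu =>
      obtain ⟨τ, σ, hσ, rfl⟩ := hu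
      rw [inner_sub_right, h τ σ hσ, sub_self]
    | zero => exact inner_zero_left _
    | add u v _ _ hu hv => rw [inner_add_left, hu, hv, add_zero]
    | smul c u _ hu => rw [inner_smul_left, hu, mul_zero]
  exact sub_eq_zero.1 <| inner_self_eq_zero.1 <|
    Submodule.inner_right_of_mem_orthogonal (sub_mem hx hy) horth

lemma inner_vec_kernelOp (hB : B.IsAlt) {k : V → V → V → ℂ} {τ σ : V} (hσ : σ ∈ commSet B τ)
    (hk : ∀ ν ∈ commSet B τ, k τ (σ + τ) ν = k τ σ ν) (x : E) :
    ⟪F.vec τ σ, F.kernelOp k x⟫_ℂ = ∑ ν ∈ commSet B τ, k τ σ ν * ⟪F.vec τ ν, x⟫_ℂ := by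
  have hsum : ∑ ν ∈ commSet B τ, k τ (σ + τ) ν * ⟪F.vec τ ν, x⟫_ℂ =
      ∑ ν ∈ commSet B τ, k τ σ ν * ⟪F.vec τ ν, x⟫_ℂ :=
    Finset.sum_congr rfl fun ν hν => by rw [hk ν hν]
  rw [kernelOp_apply, inner_vec_synth hB _ hσ, hsum, add_self_div_two]

lemma kernelOp_isSymmetric {k : V → V → V → ℂ}
    (hk : ∀ τ, ∀ σ ∈ commSet B τ, ∀ ν ∈ commSet B τ, star (k τ σ ν) = k τ ν σ) :
    (F.kernelOp k).IsSymmetric := by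
  intro x y
  simp only [kernelOp_apply, synth, inner_smul_left, inner_smul_right, sum_inner, inner_sum,
    map_sum, map_mul, inner_conj_symm, map_div₀, map_one, map_ofNat]
  congr 1
  refine Finset.sum_congr rfl fun τ _ => ?_
  simp only [Finset.sum_mul]
  rw [Finset.sum_comm]
  refine Finset.sum_congr rfl fun σ hσ => Finset.sum_congr rfl fun ν hν => ?_
  rw [← hk τ ν hν σ hσ, ← starRingEnd_apply]
  ring

lemma trace_kernelOp [FiniteDimensional ℂ E] (hB : B.IsAlt) {k : V → V → V → ℂ}
    (hk : ∀ τ, ∀ σ ∈ commSet B τ, k τ σ (σ + τ) = k τ σ σ) :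
    LinearMap.trace ℂ E (F.kernelOp k) = ∑ τ, ∑ σ ∈ commSet B τ, k τ σ σ := by
  simp only [kernelOp, map_smul, map_sum, LinearMap.trace_smulRight, smul_eq_mul,
    innerₛₗ_apply_apply, Finset.mul_sum]
  refine Finset.sum_congr rfl fun τ _ => Finset.sum_congr rfl fun σ hσ => ?_
  rw [← Finset.mul_sum, sum_mul_inner_vec hB hσ, if_pos rfl, hk τ σ hσ]
  ring

lemma kernelOp_vec (hB : B.IsAlt) {k : V → V → V → ℂ} {τ σ : V} (hσ : σ ∈ commSet B τ)
    (hk : ∀ ρ ∈ commSet B τ, k τ ρ (σ + τ) = k τ ρ σ) :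
    F.kernelOp k (F.vec τ σ) = ∑ ρ ∈ commSet B τ, k τ ρ σ • F.vec τ ρ := by
  simp only [kernelOp_apply, synth, sum_mul_inner_vec hB hσ, ite_smul, zero_smul]
  rw [Finset.sum_eq_single τ (fun τ' _ h => by simp [h]) (by simp), Finset.smul_sum]
  refine Finset.sum_congr rfl fun ρ hρ => ?_
  rw [if_pos rfl, hk ρ hρ]
  module

variable (F) in
/-- The orthogonal projection onto the sector. -/
def sectorProj : E →ₗ[ℂ] E :=
  F.kernelOp fun τ σ ν => if ν = σ ∨ ν = σ + τ then 1 / 2 else 0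

variable (F) in
/-- The operator replacing each frame coordinate by the sum over its block `C_τ`. Up to scaling it
is the projection onto the adjoint sector. -/
def blockSumOp : E →ₗ[ℂ] E := F.kernelOp fun _ _ _ => 1

variable (F) in
/-- The operator acting on each block `C_τ` by the sign matrix `(-1)^{B(ν, σ)}`. Its nonzero
eigenvalues separate the irreducible constituents of the sector. -/
def hadamardOp : E →ₗ[ℂ] E := F.kernelOp fun _ σ ν => signChar (B ν σ)

section Coordinates

variable (hB : B.IsAlt)
include hB

lemma inner_vec_sectorProj {τ σ : V} (hσ : σ ∈ commSet B τ) (x : E) :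
    ⟪F.vec τ σ, F.sectorProj x⟫_ℂ = ⟪F.vec τ σ, x⟫_ℂ := by
  have hk (ν : V) : ν = σ + τ ∨ ν = σ + τ + τ ↔ ν = σ ∨ ν = σ + τ := by
    rw [add_assoc, ZModModule.add_self, add_zero, or_comm]
  rw [sectorProj, inner_vec_kernelOp hB hσ fun ν _ => by simp only [hk]]
  simp only [ite_mul, zero_mul]
  rw [sum_commSet_ite_pair hB hσ, F.vec_add τ σ hσ]
  ring

lemma inner_vec_blockSumOp {τ σ : V} (hσ : σ ∈ commSet B τ) (x : E) :
    ⟪F.vec τ σ, F.blockSumOp x⟫_ℂ = ∑ ν ∈ commSet B τ, ⟪F.vec τ ν, x⟫_ℂ := by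
  rw [blockSumOp, inner_vec_kernelOp hB hσ fun _ _ => rfl]
  simp only [one_mul]

lemma inner_vec_hadamardOp {τ σ : V} (hσ : σ ∈ commSet B τ) (x : E) :
    ⟪F.vec τ σ, F.hadamardOp x⟫_ℂ =
      ∑ ν ∈ commSet B τ, signChar (B ν σ) * ⟪F.vec τ ν, x⟫_ℂ := by
  refine inner_vec_kernelOp hB hσ (fun ν hν => ?_) x
  rw [map_add, (mem_commSet.1 hν).2.2.2, add_zero]

lemma sectorProj_apply_of_mem {x : E} (hx : x ∈ F.sector) : F.sectorProj x = x :=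
  eq_of_forall_inner_vec_eq (kernelOp_mem_sector _ _) hx fun _ _ hσ => inner_vec_sectorProj hB hσ x

lemma hadamardOp_sectorProj (x : E) : F.hadamardOp (F.sectorProj x) = F.hadamardOp x := by
  refine eq_of_forall_inner_vec_eq (kernelOp_mem_sector _ _) (kernelOp_mem_sector _ _)
    fun τ σ hσ => ?_
  rw [inner_vec_hadamardOp hB hσ, inner_vec_hadamardOp hB hσ]
  exact Finset.sum_congr rfl fun ν hν => by rw [inner_vec_sectorProj hB hν]

lemma blockSumOp_vec {τ σ : V} (hσ : σ ∈ commSet B τ) :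
    F.blockSumOp (F.vec τ σ) = ∑ ρ ∈ commSet B τ, F.vec τ ρ := by
  rw [blockSumOp, kernelOp_vec hB hσ fun _ _ => rfl]
  simp only [one_smul]

lemma hadamardOp_vec {τ σ : V} (hσ : σ ∈ commSet B τ) :
    F.hadamardOp (F.vec τ σ) = ∑ ρ ∈ commSet B τ, signChar (B σ ρ) • F.vec τ ρ := by
  refine kernelOp_vec hB hσ fun ρ hρ => ?_
  rw [map_add, LinearMap.add_apply, form_comm hB τ, (mem_commSet.1 hρ).2.2.2, add_zero]

lemma hadamardOp_isSymmetric : F.hadamardOp.IsSymmetric :=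
  kernelOp_isSymmetric fun _ σ _ ν _ => by rw [star_signChar, form_comm hB]

lemma trace_sectorProj [FiniteDimensional ℂ E] :
    LinearMap.trace ℂ E F.sectorProj = (∑ τ, ((commSet B τ).card : ℂ)) / 2 := by
  rw [sectorProj, trace_kernelOp hB (by simp)]
  simp [← Finset.sum_mul, div_eq_mul_inv]

lemma trace_blockSumOp [FiniteDimensional ℂ E] :
    LinearMap.trace ℂ E F.blockSumOp = ∑ τ, ((commSet B τ).card : ℂ) := by
  rw [blockSumOp, trace_kernelOp hB (by simp)]
  simp

lemma trace_hadamardOp [FiniteDimensional ℂ E] :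
    LinearMap.trace ℂ E F.hadamardOp = ∑ τ, ((commSet B τ).card : ℂ) := by
  rw [hadamardOp, trace_kernelOp hB fun τ σ hσ => ?_]
  · simp [hB _]
  · rw [map_add, LinearMap.add_apply, form_comm hB τ, (mem_commSet.1 hσ).2.2.2, add_zero]

variable (hN : B.Nondegenerate)
include hN

lemma hadamardOp_blockSumOp (x : E) :
    F.hadamardOp (F.blockSumOp x) = (-2 : ℂ) • F.blockSumOp x := by
  refine eq_of_forall_inner_vec_eq (kernelOp_mem_sector _ _)
    (Submodule.smul_mem _ _ (kernelOp_mem_sector _ _)) fun τ σ hσ => ?_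
  rw [inner_vec_hadamardOp hB hσ, inner_smul_right, inner_vec_blockSumOp hB hσ,
    Finset.sum_congr rfl fun ν hν => by rw [inner_vec_blockSumOp hB hν], ← Finset.sum_mul,
    sum_signChar_of_mem_commSet hB hN hσ]

lemma hadamardOp_hadamardOp (x : E) : F.hadamardOp (F.hadamardOp x) =
    (Fintype.card V : ℂ) • F.sectorProj x - (2 : ℂ) • F.blockSumOp x := by
  refine eq_of_forall_inner_vec_eq (kernelOp_mem_sector _ _)
    (sub_mem (Submodule.smul_mem _ _ (kernelOp_mem_sector _ _))
      (Submodule.smul_mem _ _ (kernelOp_mem_sector _ _))) fun τ σ hσ => ?_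
  rw [inner_vec_hadamardOp hB hσ, inner_sub_right, inner_smul_right, inner_smul_right,
    inner_vec_blockSumOp hB hσ, inner_vec_sectorProj hB hσ,
    Finset.sum_congr rfl fun ν hν => by rw [inner_vec_hadamardOp hB hν]]
  have hswap : ∑ ν ∈ commSet B τ, signChar (B ν σ) *
        ∑ ρ ∈ commSet B τ, signChar (B ρ ν) * ⟪F.vec τ ρ, x⟫_ℂ =
      ∑ ρ ∈ commSet B τ, (∑ ν ∈ commSet B τ, signChar (B ν σ) * signChar (B ρ ν)) *
        ⟪F.vec τ ρ, x⟫_ℂ := by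
    simp only [Finset.mul_sum, Finset.sum_mul, mul_assoc]
    exact Finset.sum_comm
  rw [hswap, Finset.sum_congr rfl fun ρ hρ => by
    rw [sum_signChar_mul_signChar_of_mem_commSet hB hN hσ hρ, sub_mul, ite_mul, zero_mul],
    Finset.sum_sub_distrib, sum_commSet_ite_pair hB hσ, F.vec_add τ σ hσ, ← Finset.mul_sum]
  ring

end Coordinates

section Eigenspaces

open Module.End

omit [Module (ZMod 2) V] [DecidableEq V] in
lemma ne_zero_of_sq_eq_card {r : ℂ} (hr : r ^ 2 = Fintype.card V) : r ≠ 0 := by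
  rintro rfl
  simp [eq_comm] at hr

variable (F) in
/-- The projection onto the eigenspace of the Hadamard operator at `-2`. -/
def adjProj : E →ₗ[ℂ] E := (Fintype.card V / 2 - 2 : ℂ)⁻¹ • F.blockSumOp

variable (F) in
/-- The projection onto the eigenspace of the Hadamard operator at a square root `r` of `|V|`. -/
def hadamardProj (r : ℂ) : E →ₗ[ℂ] E :=
  (1 / 2 : ℂ) • (F.sectorProj - F.adjProj + r⁻¹ • (F.hadamardOp + (2 : ℂ) • F.adjProj))

lemma eigenspace_hadamardOp_le_sector {μ : ℂ} (hμ : μ ≠ 0) :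
    eigenspace F.hadamardOp μ ≤ F.sector := by
  intro x hx
  rw [← inv_smul_smul₀ hμ x, ← mem_eigenspace_iff.1 hx]
  exact Submodule.smul_mem _ _ (kernelOp_mem_sector _ _)

variable (hB : B.IsAlt) (hN : B.Nondegenerate)
include hB hN

lemma blockSumOp_apply_of_mem_eigenspace {μ : ℂ} (hμ : μ ≠ 0) {x : E}
    (hx : x ∈ eigenspace F.hadamardOp μ) :
    F.blockSumOp x = (((Fintype.card V : ℂ) - μ ^ 2) / 2) • x := by
  have h := hadamardOp_hadamardOp (F := F) hB hN x
  rw [sectorProj_apply_of_mem hB (eigenspace_hadamardOp_le_sector hμ hx),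
    mem_eigenspace_iff.1 hx, map_smul, mem_eigenspace_iff.1 hx] at h
  linear_combination (norm := module) (1 / 2 : ℂ) • h

lemma hadamardOp_adjProj (x : E) : F.hadamardOp (F.adjProj x) = (-2 : ℂ) • F.adjProj x := by
  simp only [adjProj, LinearMap.smul_apply, map_smul, hadamardOp_blockSumOp hB hN]
  module

section Projections

variable (hV : (Fintype.card V / 2 - 2 : ℂ) ≠ 0)
include hV

lemma isProj_adjProj : LinearMap.IsProj (eigenspace F.hadamardOp (-2)) F.adjProj where
  map_mem x := mem_eigenspace_iff.2 (hadamardOp_adjProj hB hN x)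
  map_id x hx := by
    rw [adjProj, LinearMap.smul_apply,
      blockSumOp_apply_of_mem_eigenspace hB hN (by norm_num) hx, smul_smul]
    convert one_smul ℂ x
    rw [inv_mul_eq_one₀ hV]
    ring

lemma isProj_hadamardProj {r : ℂ} (hr : r ^ 2 = Fintype.card V) :
    LinearMap.IsProj (eigenspace F.hadamardOp r) (F.hadamardProj r) where
  map_mem x := by
    have hsq : F.hadamardOp (F.hadamardOp x) =
        (r ^ 2) • F.sectorProj x - (r ^ 2 - 4) • F.adjProj x := by
      rw [hadamardOp_hadamardOp hB hN, adjProj, LinearMap.smul_apply, smul_smul, hr]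
      congr 2
      rw [eq_mul_inv_iff_mul_eq₀ hV]
      ring
    have hr0 := ne_zero_of_sq_eq_card hr
    rw [mem_eigenspace_iff]
    simp only [hadamardProj, LinearMap.smul_apply, LinearMap.add_apply, LinearMap.sub_apply,
      map_smul, map_add, map_sub, hadamardOp_sectorProj hB, hadamardOp_adjProj hB hN, hsq]
    match_scalars <;> field_simp
    ring
  map_id x hx := by
    have hr0 := ne_zero_of_sq_eq_card hr
    have hadj : F.adjProj x = 0 := by
      rw [adjProj, LinearMap.smul_apply, blockSumOp_apply_of_mem_eigenspace hB hN hr0 hx, hr]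
      simp
    simp only [hadamardProj, LinearMap.smul_apply, LinearMap.add_apply, LinearMap.sub_apply, hadj,
      sectorProj_apply_of_mem hB (eigenspace_hadamardOp_le_sector hr0 hx), mem_eigenspace_iff.1 hx]
    match_scalars
    field_simp
    norm_num

lemma sector_eq_sup_eigenspace {r : ℂ} (hr : r ^ 2 = Fintype.card V) :
    F.sector = eigenspace F.hadamardOp (-2) ⊔ eigenspace F.hadamardOp r ⊔
      eigenspace F.hadamardOp (-r) := by
  have hr0 := ne_zero_of_sq_eq_card hr
  have hr' : (-r) ^ 2 = Fintype.card V := by rw [neg_sq, hr]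
  apply le_antisymm
  · intro x hx
    have hsum : F.adjProj x + F.hadamardProj r x + F.hadamardProj (-r) x = x := by
      simp only [hadamardProj, LinearMap.smul_apply, LinearMap.add_apply, LinearMap.sub_apply,
        sectorProj_apply_of_mem hB hx, inv_neg]
      module
    rw [← hsum]
    exact Submodule.add_mem_sup (Submodule.add_mem_sup ((isProj_adjProj hB hN hV).map_mem x)
      ((isProj_hadamardProj hB hN hV hr).map_mem x)) ((isProj_hadamardProj hB hN hV hr').map_mem x)
  · exact sup_le (sup_le (eigenspace_hadamardOp_le_sector (by norm_num))
      (eigenspace_hadamardOp_le_sector hr0)) (eigenspace_hadamardOp_le_sector (neg_ne_zero.2 hr0))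

variable [FiniteDimensional ℂ E]

lemma trace_adjProj : LinearMap.trace ℂ E F.adjProj = Fintype.card V - 1 := by
  rw [adjProj, map_smul, trace_blockSumOp hB, sum_card_commSet hB hN, smul_eq_mul, mul_comm,
    mul_inv_cancel_right₀ hV]

variable (F) in
lemma finrank_eigenspace_neg_two :
    (Module.finrank ℂ (eigenspace F.hadamardOp (-2)) : ℂ) = Fintype.card V - 1 := by
  rw [← (isProj_adjProj hB hN hV).trace, trace_adjProj hB hN hV]

variable (F) in
lemma finrank_eigenspace_of_sq_eq_card {r : ℂ} (hr : r ^ 2 = Fintype.card V) :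
    (Module.finrank ℂ (eigenspace F.hadamardOp r) : ℂ) =
      (r ^ 2 - 1) * (r ^ 2 / 8 + r / 4 - 1) := by
  have hr0 := ne_zero_of_sq_eq_card hr
  rw [← (isProj_hadamardProj hB hN hV hr).trace, hadamardProj]
  simp only [map_smul, map_add, map_sub, smul_eq_mul, trace_sectorProj hB, trace_hadamardOp hB,
    trace_adjProj hB hN hV, sum_card_commSet hB hN, ← hr]
  field_simp
  ring

end Projections

omit hN in
lemma inner_eq_zero_of_mem_eigenspace {μ ν : ℂ} (hμν : μ ≠ ν) {x y : E}
    (hx : x ∈ eigenspace F.hadamardOp μ) (hy : y ∈ eigenspace F.hadamardOp ν) :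
    ⟪x, y⟫_ℂ = 0 :=
  (hadamardOp_isSymmetric hB).orthogonalFamily_eigenspaces hμν ⟨x, hx⟩ ⟨y, hy⟩

lemma eigenspace_neg_two_eq_span (hV : (Fintype.card V / 2 - 2 : ℂ) ≠ 0) :
    eigenspace F.hadamardOp (-2) =
      Submodule.span ℂ (Set.range fun τ => ∑ σ ∈ commSet B τ, F.vec τ σ) := by
  apply le_antisymm
  · intro x hx
    rw [← (isProj_adjProj hB hN hV).map_id x hx, adjProj, LinearMap.smul_apply, blockSumOp,
      kernelOp_apply, synth]
    simp only [← Finset.smul_sum]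
    exact Submodule.smul_mem _ _ <| Submodule.smul_mem _ _ <| Submodule.sum_mem _ fun τ _ =>
      Submodule.smul_mem _ _ <| Submodule.subset_span ⟨τ, rfl⟩
  · rw [Submodule.span_le]
    rintro _ ⟨τ, rfl⟩
    obtain h | ⟨σ, hσ⟩ := (commSet B τ).eq_empty_or_nonempty
    · simp [h]
    · change ∑ ρ ∈ commSet B τ, F.vec τ ρ ∈ _
      rw [← blockSumOp_vec hB hσ]
      exact mem_eigenspace_iff.2 (hadamardOp_blockSumOp hB hN _)

end Eigenspaces

section Symmetries

/-- A linear isometry permuting the frame vectors, up to a phase depending on the block only, along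
a permutation `g` of `V` that fixes `0` and preserves the form. -/
structure IsSymmetry (F : PairFrame B E) (T : E →ₗ[ℂ] E) (g : Equiv.Perm V) (s : V → ℂ) :
    Prop where
  map_zero : g 0 = 0
  form_map : ∀ x y, B (g x) (g y) = B x y
  inner_map : ∀ x y, ⟪T x, T y⟫_ℂ = ⟪x, y⟫_ℂ
  star_mul_self : ∀ τ, star (s τ) * s τ = 1
  map_vec : ∀ τ σ, T (F.vec τ σ) = s τ • F.vec (g τ) (g σ)

open Module.End

variable {T : E →ₗ[ℂ] E} {g : Equiv.Perm V} {s : V → ℂ}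

namespace IsSymmetry

lemma map_mem_commSet (hT : F.IsSymmetry T g s) {τ σ : V} :
    g σ ∈ commSet B (g τ) ↔ σ ∈ commSet B τ := by
  have hg (x : V) : g x = 0 ↔ x = 0 := by
    simpa only [hT.map_zero] using (g.apply_eq_iff_eq : g x = g 0 ↔ x = 0)
  simp only [mem_commSet, ne_eq, hg, g.apply_eq_iff_eq, hT.form_map]

lemma hadamardOp_comm (hT : F.IsSymmetry T g s) (hB : B.IsAlt) {x : E} (hx : x ∈ F.sector) :
    F.hadamardOp (T x) = T (F.hadamardOp x) := by
  induction hx using Submodule.span_induction with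
  | mem _ hx =>
    obtain ⟨τ, σ, hσ, rfl⟩ := hx
    rw [hT.map_vec, map_smul, hadamardOp_vec hB hσ, hadamardOp_vec hB (hT.map_mem_commSet.2 hσ),
      map_sum, Finset.smul_sum]
    refine (Finset.sum_equiv g (fun ρ => hT.map_mem_commSet.symm) fun ρ _ => ?_).symm
    rw [map_smul, hT.map_vec, hT.form_map, smul_comm]
  | zero => simp
  | add x y _ _ hx hy => simp only [map_add, hx, hy]
  | smul c x _ hx => simp only [map_smul, hx]

lemma map_mem_eigenspace (hT : F.IsSymmetry T g s) (hB : B.IsAlt) {μ : ℂ} (hμ : μ ≠ 0) {x : E}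
    (hx : x ∈ eigenspace F.hadamardOp μ) :
    T x ∈ eigenspace F.hadamardOp μ := by
  rw [mem_eigenspace_iff, hT.hadamardOp_comm hB (eigenspace_hadamardOp_le_sector hμ hx),
    mem_eigenspace_iff.1 hx, map_smul]

lemma inner_vec_apply_vec (hT : F.IsSymmetry T g s) {K : E →ₗ[ℂ] E} (hK : ∀ x, K (T x) = T (K x))
    (τ σ τ' σ' : V) :
    star (s τ) * s τ' * ⟪F.vec (g τ) (g σ), K (F.vec (g τ') (g σ'))⟫_ℂ =
      ⟪F.vec τ σ, K (F.vec τ' σ')⟫_ℂ := by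
  rw [← hT.inner_map (F.vec τ σ), ← hK, hT.map_vec, hT.map_vec, map_smul, inner_smul_left,
    inner_smul_right, mul_assoc, starRingEnd_apply]

end IsSymmetry

variable (F) in
/-- A set of frame symmetries which is rich enough to force Schur's lemma on the eigenspaces of the
Hadamard operator: it realizes all the sign patterns `(-1)^{B(a, τ)}` (the Pauli operators, in the
Clifford group) and all the transvections. -/
structure IsFullSymmetrySet (G : Set (E →ₗ[ℂ] E)) (hB : B.IsAlt) : Prop where
  isSymmetry : ∀ T ∈ G, ∃ g s, F.IsSymmetry T g s
  exists_sign : ∀ a, ∃ T ∈ G, F.IsSymmetry T 1 fun τ => signChar (B a τ)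
  exists_transvection : ∀ a, ∃ T ∈ G, ∃ s,
    F.IsSymmetry T (symplecticTransvection hB a 1).toEquiv s

variable {G : Set (E →ₗ[ℂ] E)} {hB : B.IsAlt} {K : E →ₗ[ℂ] E}

namespace IsFullSymmetrySet

lemma inner_vec_apply_vec_eq_zero (hG : F.IsFullSymmetrySet G hB) (hN : B.Nondegenerate)
    (hK : ∀ T ∈ G, ∀ x, K (T x) = T (K x)) {τ τ' : V} (hτ : τ ≠ τ') (σ σ' : V) :
    ⟪F.vec τ σ, K (F.vec τ' σ')⟫_ℂ = 0 := by
  obtain ⟨a, ha⟩ : ∃ a, B a (τ + τ') ≠ 0 := by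
    by_contra! h
    exact hτ (add_eq_zero_iff_eq_of_zmod_two.1 (hN.2 _ h))
  obtain ⟨T, hTG, hT⟩ := hG.exists_sign a
  have h := hT.inner_vec_apply_vec (hK T hTG) τ σ τ' σ'
  rw [star_signChar, ← AddChar.map_add_eq_mul, ← map_add, signChar_eq_ite, if_neg ha] at h
  simp only [Equiv.Perm.one_apply] at h
  linear_combination (-1 / 2 : ℂ) * h

lemma inner_vec_apply_vec_invariant (hG : F.IsFullSymmetrySet G hB)
    (hK : ∀ T ∈ G, ∀ x, K (T x) = T (K x)) {g : V ≃ₗ[ZMod 2] V} (hg : g ∈ transvectionGroup hB)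
    (τ σ ν : V) :
    ⟪F.vec (g τ) (g σ), K (F.vec (g τ) (g ν))⟫_ℂ = ⟪F.vec τ σ, K (F.vec τ ν)⟫_ℂ := by
  induction hg using Subgroup.closure_induction generalizing τ σ ν with
  | mem _ hg =>
    obtain ⟨⟨a, c⟩, rfl⟩ := hg
    obtain rfl | rfl := zmod_two_eq_zero_or_eq_one c
    · simp
    · obtain ⟨T, hTG, s, hT⟩ := hG.exists_transvection a
      have h := hT.inner_vec_apply_vec (hK T hTG) τ σ τ ν
      rwa [hT.star_mul_self, one_mul] at h
  | one => rfl
  | mul g h _ _ ihg ihh => simp only [LinearEquiv.mul_apply, ihg, ihh]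
  | inv g _ ih =>
    have hinv (x : V) : g (g⁻¹ x) = x := by
      rw [← LinearEquiv.mul_apply, mul_inv_cancel, LinearEquiv.coe_one, id_eq]
    rw [← ih, hinv, hinv, hinv]

/-- An operator commuting with a full set of symmetries has an invariant kernel, hence is a
combination of the identity, the block sum operator and the Hadamard operator. -/
theorem exists_eq_of_commute (hG : F.IsFullSymmetrySet G hB) (hN : B.Nondegenerate)
    (hK : ∀ T ∈ G, ∀ x, K (T x) = T (K x)) (hKs : ∀ x ∈ F.sector, K x ∈ F.sector) :
    ∃ α β γ : ℂ, ∀ x ∈ F.sector, K x = α • x + β • F.blockSumOp x + γ • F.hadamardOp x := by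
  obtain ⟨α, β, γ, h⟩ := exists_invariant_kernel_eq hB hN
    (k := fun τ σ ν => ⟪F.vec τ σ, K (F.vec τ ν)⟫_ℂ)
    (fun g hg => hG.inner_vec_apply_vec_invariant hK hg)
    fun τ σ _ ν hν => by rw [F.vec_add τ ν hν]
  refine ⟨α, β / 2, γ / 2, fun x hx => ?_⟩
  refine eq_of_forall_inner_vec_eq (hKs x hx) (add_mem (add_mem (Submodule.smul_mem _ _ hx)
    (Submodule.smul_mem _ _ (kernelOp_mem_sector _ _)))
    (Submodule.smul_mem _ _ (kernelOp_mem_sector _ _))) fun τ σ hσ => ?_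
  simp only [inner_add_right, inner_smul_right, inner_vec_blockSumOp hB hσ,
    inner_vec_hadamardOp hB hσ]
  induction hx using Submodule.span_induction with
  | mem _ hx =>
    obtain ⟨τ', ν, hν, rfl⟩ := hx
    have hsum := sum_mul_inner_vec (F := F) (τ := τ) hB hν fun _ => 1
    simp only [one_mul] at hsum
    rw [sum_mul_inner_vec hB hν, hsum, F.inner_vec τ σ hσ τ' ν hν]
    by_cases hτ : τ = τ'
    · subst hτ
      rw [h τ σ hσ ν hν, map_add, LinearMap.add_apply, form_comm hB τ, (mem_commSet.1 hσ).2.2.2]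
      split_ifs <;> simp_all <;> ring
    · simp [hG.inner_vec_apply_vec_eq_zero hN hK hτ, hτ]
  | zero => simp
  | add x y _ _ hx hy =>
    simp only [map_add, inner_add_right, mul_add, Finset.sum_add_distrib] at hx hy ⊢
    linear_combination hx + hy
  | smul c x _ hx =>
    simp only [map_smul, inner_smul_right, mul_left_comm _ c, ← Finset.mul_sum] at hx ⊢
    linear_combination c * hx

theorem exists_smul_of_commute (hG : F.IsFullSymmetrySet G hB) (hN : B.Nondegenerate)
    (hK : ∀ T ∈ G, ∀ x, K (T x) = T (K x)) (hKs : ∀ x ∈ F.sector, K x ∈ F.sector) {μ : ℂ}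
    (hμ : μ ≠ 0) : ∃ c : ℂ, ∀ x ∈ eigenspace F.hadamardOp μ, K x = c • x := by
  obtain ⟨α, β, γ, h⟩ := hG.exists_eq_of_commute hN hK hKs
  refine ⟨α + β * ((Fintype.card V - μ ^ 2) / 2) + γ * μ, fun x hx => ?_⟩
  rw [h x (eigenspace_hadamardOp_le_sector hμ hx),
    blockSumOp_apply_of_mem_eigenspace hB hN hμ hx, mem_eigenspace_iff.1 hx]
  module

variable [FiniteDimensional ℂ E]

lemma starProjection_comm (hG : F.IsFullSymmetrySet G hB) {W : Submodule ℂ E}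
    (hW : ∀ T ∈ G, ∀ x ∈ W, T x ∈ W) {T : E →ₗ[ℂ] E} (hT : T ∈ G) (x : E) :
    W.starProjection (T x) = T (W.starProjection x) := by
  obtain ⟨g, s, hTs⟩ := hG.isSymmetry T hT
  have hinj : Function.Injective T := by
    refine (injective_iff_map_eq_zero T).2 fun x hx => (inner_self_eq_zero (𝕜 := ℂ)).1 ?_
    rw [← hTs.inner_map, hx, inner_zero_left]
  have hmap : W.map T = W :=
    Submodule.eq_of_le_of_finrank_eq (Submodule.map_le_iff_le_comap.2 (hW T hT))
      (Submodule.equivMapOfInjective T hinj W).finrank_eq.symm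
  refine (Submodule.eq_starProjection_of_mem_of_inner_eq_zero
    (hW T hT _ (W.starProjection_apply_mem x)) fun w hw => ?_)
  rw [← hmap] at hw
  obtain ⟨w, hw, rfl⟩ := hw
  rw [← map_sub, hTs.inner_map]
  exact W.starProjection_inner_eq_zero x w hw

theorem eq_bot_or_eq_eigenspace (hG : F.IsFullSymmetrySet G hB) (hN : B.Nondegenerate) {μ : ℂ}
    (hμ : μ ≠ 0) {W : Submodule ℂ E} (hWμ : W ≤ eigenspace F.hadamardOp μ)
    (hW : ∀ T ∈ G, ∀ x ∈ W, T x ∈ W) : W = ⊥ ∨ W = eigenspace F.hadamardOp μ := by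
  obtain ⟨c, hc⟩ := hG.exists_smul_of_commute hN (K := W.starProjection)
    (fun T hT => hG.starProjection_comm hW hT) (fun x _ =>
      eigenspace_hadamardOp_le_sector hμ (hWμ (W.starProjection_apply_mem x))) hμ
  obtain rfl | hc0 := eq_or_ne c 0
  · refine .inl <| (Submodule.eq_bot_iff W).2 fun x hx => ?_
    rw [← Submodule.starProjection_eq_self_iff.2 hx]
    simpa using hc x (hWμ hx)
  · refine .inr <| hWμ.antisymm fun x hx => ?_
    rw [← inv_smul_smul₀ hc0 x, ← hc x hx]
    exact W.smul_mem _ (W.starProjection_apply_mem x)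

theorem eq_zero_of_intertwines (hG : F.IsFullSymmetrySet G hB) (hN : B.Nondegenerate) {μ ν : ℂ}
    (hμ : μ ≠ 0) (hν : ν ≠ 0) (hμν : μ ≠ ν) {L : E →ₗ[ℂ] E}
    (hL : ∀ x ∈ eigenspace F.hadamardOp μ, L x ∈ eigenspace F.hadamardOp ν)
    (hLG : ∀ T ∈ G, ∀ x ∈ eigenspace F.hadamardOp μ, L (T x) = T (L x)) :
    ∀ x ∈ eigenspace F.hadamardOp μ, L x = 0 := by
  set W := eigenspace F.hadamardOp μ
  have hW (T) (hT : T ∈ G) (x) (hx : x ∈ W) : T x ∈ W := by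
    obtain ⟨g, s, hTs⟩ := hG.isSymmetry T hT
    exact hTs.map_mem_eigenspace hB hμ hx
  obtain ⟨c, hc⟩ := hG.exists_smul_of_commute hN (K := L ∘ₗ W.starProjection)
    (fun T hT x => by
      simp only [LinearMap.comp_apply, ContinuousLinearMap.coe_coe]
      rw [hG.starProjection_comm hW hT, hLG T hT _ (W.starProjection_apply_mem x)])
    (fun x _ => eigenspace_hadamardOp_le_sector hν (hL _ (W.starProjection_apply_mem x))) hμ
  intro x hx
  have hLx : L x = c • x := by
    simpa [Submodule.starProjection_eq_self_iff.2 hx] using hc x hx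
  exact inner_self_eq_zero.1 <|
    inner_eq_zero_of_mem_eigenspace hB hμν (hLx ▸ W.smul_mem c hx) (hL x hx)

end IsFullSymmetrySet

end Symmetries

end PairFrame

end PairFrame

section PiKronecker

variable {ι R : Type*} {n : ι → Type*} [Fintype ι] [CommRing R]

/-- The Kronecker product of a finite family of square matrices. -/
def piKronecker (A : ∀ i, Matrix (n i) (n i) R) : Matrix (∀ i, n i) (∀ i, n i) R :=
  Matrix.of fun x y => ∏ i, A i (x i) (y i)

@[simp]
lemma piKronecker_apply (A : ∀ i, Matrix (n i) (n i) R) (x y : ∀ i, n i) :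
    piKronecker A x y = ∏ i, A i (x i) (y i) := rfl

lemma piKronecker_smul (c : ι → R) (A : ∀ i, Matrix (n i) (n i) R) :
    piKronecker (fun i => c i • A i) = (∏ i, c i) • piKronecker A := by
  ext x y
  simp [Finset.prod_mul_distrib]

lemma piKronecker_one [∀ i, DecidableEq (n i)] :
    piKronecker (fun i => (1 : Matrix (n i) (n i) R)) = 1 := by
  ext x y
  simp only [piKronecker_apply, Matrix.one_apply, Finset.prod_ite_zero, Finset.prod_const_one,
    Finset.mem_univ, true_imp_iff, funext_iff]

lemma conjTranspose_piKronecker [StarRing R] (A : ∀ i, Matrix (n i) (n i) R) :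
    (piKronecker A)ᴴ = piKronecker fun i => (A i)ᴴ := by
  ext x y
  simp [Matrix.conjTranspose_apply]

variable [DecidableEq ι] [∀ i, Fintype (n i)]

lemma piKronecker_mul (A A' : ∀ i, Matrix (n i) (n i) R) :
    piKronecker A * piKronecker A' = piKronecker fun i => A i * A' i := by
  ext x y
  simp only [Matrix.mul_apply, piKronecker_apply, Finset.prod_univ_sum, Fintype.piFinset_univ,
    Finset.prod_mul_distrib]

lemma trace_piKronecker (A : ∀ i, Matrix (n i) (n i) R) :
    (piKronecker A).trace = ∏ i, (A i).trace := by
  simp only [Matrix.trace, Matrix.diag_apply, piKronecker_apply, Finset.prod_univ_sum,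
    Fintype.piFinset_univ]

end PiKronecker

section Pauli

/-- The labels of the `q`-qubit Pauli operators, as a vector space over `𝔽₂`: up to a phase, the
component `(x, z)` stands for the factor `X ^ x * Z ^ z`. -/
abbrev PauliLabel (q : ℕ) := Fin q → ZMod 2 × ZMod 2

/-- The index in `1, X, Y, Z` of the Pauli matrix proportional to `X ^ a.1 * Z ^ a.2`. -/
def pauliIndex (a : ZMod 2 × ZMod 2) : Fin 4 :=
  if a.1 = 0 then if a.2 = 0 then 0 else 3 else if a.2 = 0 then 1 else 2

/-- The symplectic form on the labels of a single qubit. -/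
def qubitForm : LinearMap.BilinForm (ZMod 2) (ZMod 2 × ZMod 2) :=
  LinearMap.mk₂ (ZMod 2) (fun a b => a.1 * b.2 + a.2 * b.1)
    (fun a a' b => by simp only [Prod.fst_add, Prod.snd_add]; ring)
    (fun c a b => by simp only [Prod.smul_fst, Prod.smul_snd, smul_eq_mul]; ring)
    (fun a b b' => by simp only [Prod.fst_add, Prod.snd_add]; ring)
    (fun c a b => by simp only [Prod.smul_fst, Prod.smul_snd, smul_eq_mul]; ring)

lemma qubitForm_apply (a b : ZMod 2 × ZMod 2) : qubitForm a b = a.1 * b.2 + a.2 * b.1 := rfl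

/-- The symplectic form on the Pauli labels. -/
def pauliForm (q : ℕ) : LinearMap.BilinForm (ZMod 2) (PauliLabel q) :=
  ∑ i, qubitForm.compl₁₂ (LinearMap.proj i) (LinearMap.proj i)

variable {q : ℕ}

lemma pauliForm_apply (a b : PauliLabel q) : pauliForm q a b = ∑ i, qubitForm (a i) (b i) := by
  simp [pauliForm, LinearMap.sum_apply]

variable (q) in
lemma pauliForm_isAlt : (pauliForm q).IsAlt := fun a => by
  simp [pauliForm_apply, qubitForm_apply, mul_comm, CharTwo.add_self_eq_zero]

variable (q) in
lemma pauliForm_nondegenerate : (pauliForm q).Nondegenerate := by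
  refine (pauliForm_isAlt q).isRefl.nondegenerate_iff_separatingLeft.2 fun a ha => ?_
  funext i
  have h (b : ZMod 2 × ZMod 2) : qubitForm (a i) b = 0 := by
    rw [← ha (Pi.single i b), pauliForm_apply,
      Finset.sum_eq_single i (fun j _ hj => by simp [hj]) (by simp), Pi.single_eq_same]
  exact Prod.ext (by simpa [qubitForm_apply] using h (0, 1))
    (by simpa [qubitForm_apply] using h (1, 0))

variable (q) in
lemma card_pauliLabel : Fintype.card (PauliLabel q) = 4 ^ q := by
  simp

lemma pauliIndex_bijective : Function.Bijective pauliIndex := by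
  decide

lemma pauliIndex_zero : pauliIndex 0 = 0 := rfl

lemma conjTranspose_pauli1 (i : Fin 4) : (pauli1 i)ᴴ = pauli1 i := by
  fin_cases i <;> ext x y <;> fin_cases x <;> fin_cases y <;> simp [pauli1]

lemma pauli1_mul_self (i : Fin 4) : pauli1 i * pauli1 i = 1 := by
  fin_cases i <;> ext x y <;> fin_cases x <;> fin_cases y <;> simp [pauli1]

lemma trace_pauli1 (i : Fin 4) : (pauli1 i).trace = if i = 0 then 2 else 0 := by
  fin_cases i <;> simp [pauli1, Matrix.trace_fin_two]

/-- The phases in the multiplication table of the Pauli matrices `1, X, Y, Z`. -/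
def pauliPhase : Matrix (Fin 4) (Fin 4) ℂ :=
  !![1, 1, 1, 1; 1, 1, Complex.I, -Complex.I; 1, -Complex.I, 1, Complex.I;
    1, Complex.I, -Complex.I, 1]

lemma pauli1_mul_pauli1 (a b : ZMod 2 × ZMod 2) :
    pauli1 (pauliIndex a) * pauli1 (pauliIndex b) =
      pauliPhase (pauliIndex a) (pauliIndex b) • pauli1 (pauliIndex (a + b)) := by
  obtain ⟨a₁, a₂⟩ := a
  obtain ⟨b₁, b₂⟩ := b
  obtain rfl | rfl := zmod_two_eq_zero_or_eq_one a₁ <;>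
  obtain rfl | rfl := zmod_two_eq_zero_or_eq_one a₂ <;>
  obtain rfl | rfl := zmod_two_eq_zero_or_eq_one b₁ <;>
  obtain rfl | rfl := zmod_two_eq_zero_or_eq_one b₂ <;>
  simp [pauli1, pauliIndex, pauliPhase, CharTwo.add_self_eq_zero, Matrix.one_fin_two]

lemma pauliPhase_sq (a b : ZMod 2 × ZMod 2) :
    pauliPhase (pauliIndex a) (pauliIndex b) ^ 2 = signChar (qubitForm a b) := by
  obtain ⟨a₁, a₂⟩ := a
  obtain ⟨b₁, b₂⟩ := b
  obtain rfl | rfl := zmod_two_eq_zero_or_eq_one a₁ <;>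
  obtain rfl | rfl := zmod_two_eq_zero_or_eq_one a₂ <;>
  obtain rfl | rfl := zmod_two_eq_zero_or_eq_one b₁ <;>
  obtain rfl | rfl := zmod_two_eq_zero_or_eq_one b₂ <;>
  simp [qubitForm_apply, pauliIndex, pauliPhase, signChar_one, CharTwo.add_self_eq_zero]

/-- The `q`-qubit Pauli operator with label `a`. -/
def pauli (a : PauliLabel q) : Mat q := PauliOp fun i => pauliIndex (a i)

/-- The phase in the product of two Pauli operators. -/
def pauliCocycle (a b : PauliLabel q) : ℂ := ∏ i, pauliPhase (pauliIndex (a i)) (pauliIndex (b i))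

lemma pauli_eq_piKronecker (a : PauliLabel q) :
    pauli a = piKronecker fun i => pauli1 (pauliIndex (a i)) := rfl

lemma pauli_zero : pauli (0 : PauliLabel q) = 1 := by
  simp only [pauli_eq_piKronecker, Pi.zero_apply, pauliIndex_zero]
  exact piKronecker_one

lemma conjTranspose_pauli (a : PauliLabel q) : (pauli a)ᴴ = pauli a := by
  simp only [pauli_eq_piKronecker, conjTranspose_piKronecker, conjTranspose_pauli1]

lemma pauli_mul_self (a : PauliLabel q) : pauli a * pauli a = 1 := by
  simp only [pauli_eq_piKronecker, piKronecker_mul, pauli1_mul_self, piKronecker_one]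

lemma pauli_mul_pauli (a b : PauliLabel q) :
    pauli a * pauli b = pauliCocycle a b • pauli (a + b) := by
  simp only [pauli_eq_piKronecker, piKronecker_mul, pauli1_mul_pauli1, piKronecker_smul,
    pauliCocycle, Pi.add_apply]

lemma pauliCocycle_sq (a b : PauliLabel q) :
    pauliCocycle a b ^ 2 = signChar (pauliForm q a b) := by
  simp only [pauliCocycle, ← Finset.prod_pow, pauliForm_apply, pauliPhase_sq]
  exact (map_prod signChar.toMonoidHom (fun i => .ofAdd (qubitForm (a i) (b i))) _).symm

lemma trace_pauli (a : PauliLabel q) : (pauli a).trace = if a = 0 then 2 ^ q else 0 := by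
  rw [pauli_eq_piKronecker, trace_piKronecker]
  simp only [trace_pauli1, ← pauliIndex_zero, pauliIndex_bijective.injective.eq_iff]
  simp [Finset.prod_ite_zero, funext_iff]

lemma pauli_ne_zero (a : PauliLabel q) : pauli a ≠ 0 := fun h => by
  simpa [h] using pauli_mul_self a

lemma pauliCocycle_self (a : PauliLabel q) : pauliCocycle a a = 1 := by
  have h := pauli_mul_self a
  rw [pauli_mul_pauli, ZModModule.add_self, pauli_zero] at h
  exact smul_left_injective ℂ (one_ne_zero (α := Mat q)) (h.trans (one_smul ℂ _).symm)

lemma pauliCocycle_mul_add_right (a b : PauliLabel q) :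
    pauliCocycle a b * pauliCocycle (a + b) b = 1 := by
  have h : (pauliCocycle a b * pauliCocycle (a + b) b) • pauli a = (1 : ℂ) • pauli a := calc
    _ = pauli a * pauli b * pauli b := by
      rw [pauli_mul_pauli, smul_mul_assoc, pauli_mul_pauli, smul_smul, add_assoc,
        ZModModule.add_self, add_zero]
    _ = _ := by rw [mul_assoc, pauli_mul_self, mul_one, one_smul]
  exact smul_left_injective ℂ (pauli_ne_zero a) h

lemma pauliCocycle_mul_swap (a b : PauliLabel q) : pauliCocycle a b * pauliCocycle b a = 1 := by
  have h : (pauliCocycle a b * pauliCocycle b a) • (1 : Mat q) = (1 : ℂ) • 1 := calc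
    _ = pauli a * pauli b * (pauli b * pauli a) := by
      rw [pauli_mul_pauli, pauli_mul_pauli, smul_mul_smul_comm, add_comm b, pauli_mul_self]
    _ = _ := by
      rw [mul_assoc, ← mul_assoc (pauli b), pauli_mul_self, one_mul, pauli_mul_self, one_smul]
  exact smul_left_injective ℂ one_ne_zero h

lemma pauli_mul_pauli_comm (a b : PauliLabel q) :
    pauli b * pauli a = signChar (pauliForm q a b) • (pauli a * pauli b) := by
  have h : pauliCocycle b a = pauliCocycle a b ^ 2 * pauliCocycle a b := by
    have := signChar_mul_self (pauliForm q a b)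
    rw [← pauliCocycle_sq] at this
    linear_combination (pauliCocycle a b ^ 3) * pauliCocycle_mul_swap a b -
      pauliCocycle b a * this
  rw [pauli_mul_pauli, pauli_mul_pauli, add_comm b, h, pauliCocycle_sq, smul_smul]

/-- The normalized `q`-qubit Pauli operator with label `a`. -/
def normPauli (a : PauliLabel q) : Mat q := (sqrtd q)⁻¹ • pauli a

variable (q) in
lemma sqrtd_mul_self : sqrtd q * sqrtd q = 2 ^ q := by
  rw [sqrtd, ← Complex.ofReal_mul, Real.mul_self_sqrt (by positivity)]
  push_cast
  rfl

variable (q) in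
lemma sqrtd_ne_zero : sqrtd q ≠ 0 := fun h =>
  pow_ne_zero q (two_ne_zero (α := ℂ)) (by rw [← sqrtd_mul_self, h, zero_mul])

variable (q) in
lemma star_sqrtd : star (sqrtd q) = sqrtd q := Complex.conj_ofReal _

lemma conjTranspose_normPauli (a : PauliLabel q) : (normPauli a)ᴴ = normPauli a := by
  rw [normPauli, Matrix.conjTranspose_smul, conjTranspose_pauli, star_inv₀, star_sqrtd]

lemma normPauli_zero : normPauli (0 : PauliLabel q) = sigma0 q := by
  rw [normPauli, pauli_zero, sigma0]

lemma normPauli_ne_zero (a : PauliLabel q) : normPauli a ≠ 0 :=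
  smul_ne_zero (inv_ne_zero (sqrtd_ne_zero q)) (pauli_ne_zero a)

lemma nprod_normPauli (a b : PauliLabel q) :
    nprod (normPauli a) (normPauli b) = pauliCocycle a b • normPauli (a + b) := by
  rw [nprod, normPauli, normPauli, normPauli, smul_mul_smul_comm, pauli_mul_pauli, smul_smul,
    smul_smul, smul_smul]
  congr 1
  field_simp [sqrtd_ne_zero q]

lemma trace_normPauli_mul (a b : PauliLabel q) :
    (normPauli a * normPauli b).trace = if a = b then 1 else 0 := by
  rw [normPauli, normPauli, smul_mul_smul_comm, pauli_mul_pauli, smul_smul, Matrix.trace_smul,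
    trace_pauli, ← mul_inv, sqrtd_mul_self]
  simp only [add_eq_zero_iff_eq_of_zmod_two]
  split_ifs with h
  · subst h
    simp [pauliCocycle_self]
  · rw [smul_zero]

lemma normPauli_injective : Function.Injective (normPauli (q := q)) := fun a b h => by
  by_contra hab
  have := trace_normPauli_mul a b
  simp [← h, hab, trace_normPauli_mul] at this

lemma normPauli_mul_comm (a b : PauliLabel q) :
    normPauli b * normPauli a = signChar (pauliForm q a b) • (normPauli a * normPauli b) := by
  simp only [normPauli, smul_mul_smul_comm, pauli_mul_pauli_comm a b, smul_comm _ (signChar _)]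

lemma normPauli_commute_iff (a b : PauliLabel q) :
    normPauli a * normPauli b = normPauli b * normPauli a ↔ pauliForm q a b = 0 := by
  have hne : normPauli a * normPauli b ≠ 0 := fun h => by
    have := nprod_normPauli a b
    rw [nprod, h, smul_zero, eq_comm, smul_eq_zero_iff_left (normPauli_ne_zero _)] at this
    simpa [this] using pauliCocycle_mul_swap a b
  rw [eq_comm, normPauli_mul_comm a, ← signChar_eq_one_iff]
  exact ⟨fun h => smul_left_injective ℂ hne (h.trans (one_smul ℂ _).symm),
    fun h => by rw [h, one_smul]⟩

lemma mem_sigmaHat_iff {M : Mat q} : M ∈ sigmaHat q ↔ ∃ a, M = normPauli a := by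
  constructor
  · rintro ⟨f, rfl⟩
    choose a ha using fun i => pauliIndex_bijective.surjective (f i)
    exact ⟨a, by rw [normPauli, pauli, funext ha]⟩
  · rintro ⟨a, rfl⟩
    exact ⟨_, rfl⟩

lemma normPauli_mem_sigmaSet {a : PauliLabel q} : normPauli a ∈ sigmaSet q ↔ a ≠ 0 := by
  rw [sigmaSet, ← normPauli_zero, Set.mem_sdiff, Set.mem_singleton_iff, normPauli_injective.eq_iff,
    and_iff_right (mem_sigmaHat_iff.2 ⟨a, rfl⟩)]

lemma CSet_normPauli {τ : PauliLabel q} (hτ : τ ≠ 0) :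
    CSet (normPauli τ) = normPauli '' (commSet (pauliForm q) τ : Set (PauliLabel q)) := by
  ext M
  constructor
  · rintro ⟨hM, hne, hcomm⟩
    obtain ⟨σ, rfl⟩ := mem_sigmaHat_iff.1 hM.1
    exact ⟨σ, mem_commSet.2 ⟨hτ, normPauli_mem_sigmaSet.1 hM, fun h => hne (h ▸ rfl),
      (normPauli_commute_iff σ τ).1 hcomm⟩, rfl⟩
  · rintro ⟨σ, hσ, rfl⟩
    obtain ⟨-, hσ0, hne, hcomm⟩ := mem_commSet.1 hσ
    exact ⟨normPauli_mem_sigmaSet.2 hσ0, fun h => hne (normPauli_injective h),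
      (normPauli_commute_iff σ τ).2 hcomm⟩

end Pauli

section Clifford

variable {q : ℕ} {U : Mat q} {g : PauliLabel q → PauliLabel q} {s : PauliLabel q → ℂ}

/-- `U` is a unitary that acts on the normalized Pauli operators by conjugation as the signed
permutation `(g, s)` of their labels. -/
structure ActsOnPaulis (U : Mat q) (g : PauliLabel q → PauliLabel q) (s : PauliLabel q → ℂ) :
    Prop where
  mem_unitaryGroup : U ∈ Matrix.unitaryGroup (Idx q) ℂ
  sign : ∀ a, s a = 1 ∨ s a = -1
  conj : ∀ a, U * normPauli a * Uᴴ = s a • normPauli (g a)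

namespace ActsOnPaulis

lemma mem_Cliff (h : ActsOnPaulis U g s) : U ∈ Cliff q := by
  refine ⟨h.mem_unitaryGroup, fun M hM => ?_⟩
  obtain ⟨a, rfl⟩ := mem_sigmaHat_iff.1 hM
  refine ⟨_, mem_sigmaHat_iff.2 ⟨g a, rfl⟩, ?_⟩
  rw [h.conj]
  exact (h.sign a).imp (fun hs => by rw [hs, one_smul]) fun hs => by rw [hs, neg_one_smul]

lemma exists_of_mem_Cliff (hU : U ∈ Cliff q) : ∃ g s, ActsOnPaulis U g s := by
  have key (a : PauliLabel q) : ∃ b, ∃ c : ℂ, (c = 1 ∨ c = -1) ∧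
      U * normPauli a * Uᴴ = c • normPauli b := by
    obtain ⟨τ, hτ, h⟩ := hU.2 _ (mem_sigmaHat_iff.2 ⟨a, rfl⟩)
    obtain ⟨b, rfl⟩ := mem_sigmaHat_iff.1 hτ
    obtain h | h := h
    · exact ⟨b, 1, .inl rfl, by rw [h, one_smul]⟩
    · exact ⟨b, -1, .inr rfl, by rw [h, neg_one_smul]⟩
  choose g s hs h using key
  exact ⟨g, s, hU.1, hs, h⟩

lemma sign_mul_self (h : ActsOnPaulis U g s) (a : PauliLabel q) : s a * s a = 1 := by
  obtain hs | hs := h.sign a <;> simp [hs]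

lemma sign_ne_zero (h : ActsOnPaulis U g s) (a : PauliLabel q) : s a ≠ 0 :=
  left_ne_zero_of_mul_eq_one (h.sign_mul_self a)

lemma conj_eq_conjStarAlgAut (h : ActsOnPaulis U g s) (a : PauliLabel q) :
    Unitary.conjStarAlgAut ℂ (Mat q) ⟨U, h.mem_unitaryGroup⟩ (normPauli a) =
      s a • normPauli (g a) :=
  h.conj a

lemma conj_nprod (h : ActsOnPaulis U g s) (a b : PauliLabel q) :
    U * nprod (normPauli a) (normPauli b) * Uᴴ =
      (s a * s b) • nprod (normPauli (g a)) (normPauli (g b)) := by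
  change Unitary.conjStarAlgAut ℂ (Mat q) ⟨U, h.mem_unitaryGroup⟩ _ = _
  rw [nprod, map_smul, map_mul, h.conj_eq_conjStarAlgAut, h.conj_eq_conjStarAlgAut,
    smul_mul_smul_comm, smul_comm, nprod]

lemma injective (h : ActsOnPaulis U g s) : Function.Injective g := fun a b hab => by
  have hsmul : s b • normPauli a = s a • normPauli b := by
    apply EquivLike.injective (Unitary.conjStarAlgAut ℂ (Mat q) ⟨U, h.mem_unitaryGroup⟩)
    rw [map_smul, map_smul, h.conj_eq_conjStarAlgAut, h.conj_eq_conjStarAlgAut, hab, smul_comm]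
  by_contra hne
  apply h.sign_ne_zero a
  have := congrArg (fun M => (M * normPauli b).trace) hsmul
  simpa [trace_normPauli_mul, hne] using this.symm

lemma map_zero (h : ActsOnPaulis U g s) : g 0 = 0 := by
  by_contra hne
  have hconj : (sqrtd q)⁻¹ • 1 = s 0 • normPauli (g 0) := by
    rw [← h.conj_eq_conjStarAlgAut, normPauli_zero, sigma0, map_smul, map_one]
  rw [← sigma0, ← normPauli_zero] at hconj
  have := congrArg (fun M => (M * normPauli 0).trace) hconj
  simp [trace_normPauli_mul, hne] at this

lemma form_map (h : ActsOnPaulis U g s) (a b : PauliLabel q) :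
    pauliForm q (g a) (g b) = pauliForm q a b := by
  have hzero : pauliForm q a b = 0 ↔ pauliForm q (g a) (g b) = 0 := by
    rw [← normPauli_commute_iff, ← normPauli_commute_iff (g a), ← EquivLike.apply_eq_iff_eq
      (Unitary.conjStarAlgAut ℂ (Mat q) ⟨U, h.mem_unitaryGroup⟩), map_mul, map_mul,
      h.conj_eq_conjStarAlgAut, h.conj_eq_conjStarAlgAut, smul_mul_smul_comm, smul_mul_smul_comm,
      mul_comm (s b),
      (smul_right_injective _ (mul_ne_zero (h.sign_ne_zero a) (h.sign_ne_zero b))).eq_iff]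
  obtain h₁ | h₁ := zmod_two_eq_zero_or_eq_one (pauliForm q (g a) (g b)) <;>
    obtain h₂ | h₂ := zmod_two_eq_zero_or_eq_one (pauliForm q a b) <;> simp_all

end ActsOnPaulis

lemma actsOnPaulis_pauli (a : PauliLabel q) :
    ActsOnPaulis (pauli a) id fun b => signChar (pauliForm q a b) where
  mem_unitaryGroup := by
    rw [Matrix.mem_unitaryGroup_iff, star_eq_conjTranspose, conjTranspose_pauli, pauli_mul_self]
  sign b := by
    rw [signChar_eq_ite]
    exact ite_eq_or_eq ..
  conj b := by
    rw [conjTranspose_pauli, normPauli, mul_smul_comm, smul_mul_assoc, mul_assoc,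
      pauli_mul_pauli_comm a b, mul_smul_comm, ← mul_assoc, pauli_mul_self, one_mul, smul_comm]
    rfl

/-- The Clifford unitary `(1 + i P) / √2` associated with a Pauli operator `P`. -/
def pauliRotation (a : PauliLabel q) : Mat q :=
  (Real.sqrt 2 : ℂ)⁻¹ • (1 + Complex.I • pauli a)

lemma inv_sqrt_two_mul_self : (Real.sqrt 2 : ℂ)⁻¹ * (Real.sqrt 2 : ℂ)⁻¹ = 1 / 2 := by
  rw [← mul_inv, ← Complex.ofReal_mul, Real.mul_self_sqrt zero_le_two]
  norm_num

lemma pauliRotation_mul_mul_conjTranspose (a : PauliLabel q) (M : Mat q) :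
    pauliRotation a * M * (pauliRotation a)ᴴ =
      (1 / 2 : ℂ) • ((1 + Complex.I • pauli a) * M * (1 - Complex.I • pauli a)) := by
  have hadj : (pauliRotation a)ᴴ = (Real.sqrt 2 : ℂ)⁻¹ • (1 - Complex.I • pauli a) := by
    simp only [pauliRotation, Matrix.conjTranspose_smul, Matrix.conjTranspose_add,
      Matrix.conjTranspose_one, conjTranspose_pauli, star_inv₀, Complex.star_def,
      Complex.conj_ofReal, Complex.conj_I, neg_smul, sub_eq_add_neg]
  rw [hadj, pauliRotation, smul_mul_assoc, smul_mul_smul_comm, inv_sqrt_two_mul_self]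

lemma one_add_mul_one_sub_pauli (a : PauliLabel q) :
    (1 + Complex.I • pauli a) * (1 - Complex.I • pauli a) = (2 : ℂ) • 1 := by
  simp only [add_mul, mul_sub, one_mul, mul_one, smul_mul_smul_comm, pauli_mul_self,
    Complex.I_mul_I, two_smul, neg_one_smul]
  abel

lemma one_add_pauli_mul_of_commute (a : PauliLabel q) {M : Mat q}
    (hM : pauli a * M = M * pauli a) :
    (1 + Complex.I • pauli a) * M * (1 - Complex.I • pauli a) = (2 : ℂ) • M := by
  have hcomm : (1 + Complex.I • pauli a) * M = M * (1 + Complex.I • pauli a) := by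
    rw [add_mul, mul_add, one_mul, mul_one, smul_mul_assoc, mul_smul_comm, hM]
  rw [hcomm, mul_assoc, one_add_mul_one_sub_pauli, mul_smul_comm, mul_one]

lemma one_add_pauli_mul_of_anticommute (a : PauliLabel q) {M : Mat q}
    (hM : pauli a * M = -(M * pauli a)) :
    (1 + Complex.I • pauli a) * M * (1 - Complex.I • pauli a) =
      (-2 * Complex.I) • (M * pauli a) := by
  have hcomm : (1 + Complex.I • pauli a) * M = M * (1 - Complex.I • pauli a) := by
    rw [add_mul, one_mul, smul_mul_assoc, hM, mul_sub, mul_one, mul_smul_comm, smul_neg,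
      sub_eq_add_neg]
  have hsq : (1 - Complex.I • pauli a) * (1 - Complex.I • pauli a) =
      (-2 * Complex.I) • pauli a := by
    simp only [sub_mul, mul_sub, one_mul, mul_one, smul_mul_smul_comm, pauli_mul_self,
      Complex.I_mul_I]
    module
  rw [hcomm, mul_assoc, hsq, mul_smul_comm]

lemma actsOnPaulis_pauliRotation (a : PauliLabel q) :
    ActsOnPaulis (pauliRotation a) (symplecticTransvection (pauliForm_isAlt q) a 1)
      fun b => if pauliForm q a b = 0 then 1 else -Complex.I * pauliCocycle b a where
  mem_unitaryGroup := by
    have h := pauliRotation_mul_mul_conjTranspose a 1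
    rw [mul_one, mul_one, one_add_mul_one_sub_pauli, smul_smul, one_div,
      inv_mul_cancel₀ two_ne_zero, one_smul] at h
    rwa [Matrix.mem_unitaryGroup_iff, star_eq_conjTranspose]
  sign b := by
    split_ifs with h
    · exact .inl rfl
    · apply sq_eq_one_iff.1
      rw [mul_pow, pauliCocycle_sq, form_comm (pauliForm_isAlt q), neg_sq, Complex.I_sq,
        (zmod_two_eq_zero_or_eq_one _).resolve_left h, signChar_one]
      norm_num
  conj b := by
    have hswap := pauli_mul_pauli_comm b a
    rw [form_comm (pauliForm_isAlt q)] at hswap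
    rw [pauliRotation_mul_mul_conjTranspose, symplecticTransvection_apply, one_mul, normPauli,
      mul_smul_comm, smul_mul_assoc, normPauli, smul_comm, smul_comm _ (sqrtd q)⁻¹]
    congr 1
    obtain h | h := zmod_two_eq_zero_or_eq_one (pauliForm q a b)
    · rw [h, AddChar.map_zero_eq_one, one_smul] at hswap
      rw [one_add_pauli_mul_of_commute a hswap, h, if_pos rfl, zero_smul, add_zero, one_smul,
        smul_smul, one_div, inv_mul_cancel₀ two_ne_zero, one_smul]
    · rw [h, signChar_one, neg_one_smul] at hswap
      rw [one_add_pauli_mul_of_anticommute a hswap, pauli_mul_pauli, h, one_smul,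
        if_neg one_ne_zero, smul_smul, smul_smul]
      congr 1
      ring

end Clifford

section TwoCopy

open scoped InnerProductSpace ComplexOrder

variable {q : ℕ}

/-- The Hilbert–Schmidt norm, as a local instance on operators of the two-copy space. -/
abbrev hsNormedAddCommGroup (q : ℕ) : NormedAddCommGroup (BMat q) :=
  Matrix.toMatrixNormedAddCommGroup 1 Matrix.PosDef.one

attribute [local instance] hsNormedAddCommGroup

/-- The Hilbert–Schmidt inner product, as a local instance on operators of the two-copy space. -/
abbrev hsInnerProductSpace (q : ℕ) : InnerProductSpace ℂ (BMat q) :=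
  Matrix.toMatrixInnerProductSpace 1 Matrix.PosDef.one.posSemidef

attribute [local instance] hsInnerProductSpace

lemma inner_eq_hs (x y : BMat q) : ⟪x, y⟫_ℂ = hs x y := by
  rw [hs, Matrix.trace_mul_comm]
  simp [inner]

lemma hs_kronecker (A B C D : Mat q) :
    hs (A ⊗ₖ B) (C ⊗ₖ D) = (Aᴴ * C).trace * (Bᴴ * D).trace := by
  rw [hs, Matrix.conjTranspose_kronecker, ← Matrix.mul_kronecker_mul, Matrix.trace_kronecker]

lemma SVec_comm (σ τ : Mat q) : SVec σ τ = SVec τ σ := by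
  rw [SVec, SVec, add_comm]

lemma SVec_smul_left (c : ℂ) (σ τ : Mat q) : SVec (c • σ) τ = c • SVec σ τ := by
  simp only [SVec, Matrix.smul_kronecker, Matrix.kronecker_smul, ← smul_add, smul_comm c]

lemma SVec_smul_right (c : ℂ) (σ τ : Mat q) : SVec σ (c • τ) = c • SVec σ τ := by
  rw [SVec_comm, SVec_smul_left, SVec_comm]

lemma inner_SVec_normPauli (a b c d : PauliLabel q) :
    ⟪SVec (normPauli a) (normPauli b), SVec (normPauli c) (normPauli d)⟫_ℂ =
      (if a = c ∧ b = d then 1 else 0) + if a = d ∧ b = c then 1 else 0 := by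
  have hkron (a b c d : PauliLabel q) :
      ⟪normPauli a ⊗ₖ normPauli b, normPauli c ⊗ₖ normPauli d⟫_ℂ =
        if a = c ∧ b = d then 1 else 0 := by
    rw [inner_eq_hs, hs_kronecker, conjTranspose_normPauli, conjTranspose_normPauli,
      trace_normPauli_mul, trace_normPauli_mul, ite_zero_mul_ite_zero, mul_one]
  simp only [SVec, inner_smul_left, inner_smul_right, inner_add_left, inner_add_right, hkron,
    map_inv₀, Complex.conj_ofReal, and_comm]
  linear_combination 2 * ((if a = c ∧ b = d then 1 else 0) + if a = d ∧ b = c then 1 else 0) *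
    inv_sqrt_two_mul_self

/-- The vector `S_{σ,σ·τ}` for Pauli operators with labels `σ`, `τ`. -/
def pauliVec (τ σ : PauliLabel q) : BMat q :=
  SVec (normPauli σ) (nprod (normPauli σ) (normPauli τ))

lemma pauliVec_eq_smul (τ σ : PauliLabel q) :
    pauliVec τ σ = pauliCocycle σ τ • SVec (normPauli σ) (normPauli (σ + τ)) := by
  rw [pauliVec, nprod_normPauli, SVec_smul_right]

lemma pauliCocycle_of_form_eq_zero {σ τ : PauliLabel q} (h : pauliForm q σ τ = 0) :
    pauliCocycle σ τ = 1 ∨ pauliCocycle σ τ = -1 :=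
  sq_eq_one_iff.1 (by rw [pauliCocycle_sq, h, AddChar.map_zero_eq_one])

lemma pauliCocycle_add_right {σ τ : PauliLabel q} (h : pauliForm q σ τ = 0) :
    pauliCocycle (σ + τ) τ = pauliCocycle σ τ := by
  have := pauliCocycle_mul_add_right σ τ
  obtain h | h := pauliCocycle_of_form_eq_zero h <;> rw [h] at this ⊢
  · linear_combination this
  · linear_combination -this

lemma pauliVec_add {τ σ : PauliLabel q} (h : pauliForm q σ τ = 0) :
    pauliVec τ (σ + τ) = pauliVec τ σ := by
  rw [pauliVec_eq_smul, pauliVec_eq_smul, pauliCocycle_add_right h, add_assoc,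
    ZModModule.add_self, add_zero, SVec_comm]

lemma inner_pauliVec {τ σ τ' σ' : PauliLabel q} (hτ : τ ≠ 0) (h : pauliForm q σ τ = 0)
    (h' : pauliForm q σ' τ' = 0) :
    ⟪pauliVec τ σ, pauliVec τ' σ'⟫_ℂ = if τ = τ' ∧ (σ' = σ ∨ σ' = σ + τ) then 1 else 0 := by
  have hstraight : (σ = σ' ∧ σ + τ = σ' + τ') ↔ τ = τ' ∧ σ' = σ := by
    constructor <;> rintro ⟨rfl, h⟩ <;> simp_all
  have hcrossed : (σ = σ' + τ' ∧ σ + τ = σ') ↔ τ = τ' ∧ σ' = σ + τ := by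
    constructor
    · rintro ⟨h₁, rfl⟩
      rw [add_assoc, left_eq_add, add_eq_zero_iff_eq_of_zmod_two] at h₁
      exact ⟨h₁, rfl⟩
    · rintro ⟨rfl, rfl⟩
      rw [add_assoc, ZModModule.add_self, add_zero]
      exact ⟨rfl, rfl⟩
  have hphase : (starRingEnd ℂ) (pauliCocycle σ τ) * pauliCocycle σ τ = 1 := by
    obtain h | h := pauliCocycle_of_form_eq_zero h <;> simp [h]
  rw [pauliVec_eq_smul, pauliVec_eq_smul, inner_smul_left, inner_smul_right,
    inner_SVec_normPauli]
  simp only [hstraight, hcrossed]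
  by_cases hττ' : τ = τ'
  · subst hττ'
    by_cases hσ : σ' = σ
    · simp [hσ, hτ, hphase]
    · by_cases hσ' : σ' = σ + τ
      · simp [hσ', hτ, pauliCocycle_add_right h, hphase]
      · simp [hσ, hσ']
  · simp [hττ']

variable (q) in
/-- The pair frame of the vectors `S_{σ,σ·τ}`. -/
def pauliFrame : PairFrame (pauliForm q) (BMat q) where
  vec := pauliVec
  vec_add _ _ hσ := pauliVec_add (mem_commSet.1 hσ).2.2.2
  inner_vec _ _ hσ _ _ hσ' :=
    inner_pauliVec (mem_commSet.1 hσ).1 (mem_commSet.1 hσ).2.2.2 (mem_commSet.1 hσ').2.2.2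

lemma pauliFrame_vec (τ σ : PauliLabel q) : (pauliFrame q).vec τ σ = pauliVec τ σ := rfl

lemma mem_commSet_add_left {τ σ : PauliLabel q} (hσ : σ ∈ commSet (pauliForm q) τ) :
    σ ∈ commSet (pauliForm q) (σ + τ) := by
  obtain ⟨hτ, hσ0, hne, hστ⟩ := mem_commSet.1 hσ
  refine mem_commSet.2 ⟨fun h => hne (add_eq_zero_iff_eq_of_zmod_two.1 h), hσ0, ?_, ?_⟩
  · simpa [eq_comm] using hτ
  · rw [map_add, pauliForm_isAlt q, hστ, add_zero]

lemma SVec_normPauli_mem_sector {τ σ : PauliLabel q} (hσ : σ ∈ commSet (pauliForm q) τ) :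
    SVec (normPauli σ) (normPauli τ) ∈ (pauliFrame q).sector := by
  have hmem := PairFrame.vec_mem_sector (F := pauliFrame q) (mem_commSet_add_left hσ)
  rw [pauliFrame_vec, pauliVec_eq_smul, ← add_assoc, ZModModule.add_self, zero_add] at hmem
  refine (Submodule.smul_mem_iff _ ?_).1 hmem
  exact left_ne_zero_of_mul_eq_one (pauliCocycle_mul_swap _ _)

variable (q) in
lemma sector_pauliFrame : (pauliFrame q).sector = VScom q := by
  apply le_antisymm <;> refine Submodule.span_le.2 ?_
  · rintro _ ⟨τ, σ, hσ, rfl⟩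
    obtain ⟨hτ, -⟩ := mem_commSet.1 (mem_commSet_add_left hσ)
    rw [pauliFrame_vec, pauliVec_eq_smul]
    refine Submodule.smul_mem _ _ (Submodule.subset_span
      ⟨_, normPauli_mem_sigmaSet.2 hτ, _, ?_, rfl⟩)
    rw [CSet_normPauli hτ]
    exact ⟨σ, mem_commSet_add_left hσ, rfl⟩
  · rintro _ ⟨_, hτ, _, hσ, rfl⟩
    obtain ⟨τ, rfl⟩ := mem_sigmaHat_iff.1 hτ.1
    rw [CSet_normPauli (normPauli_mem_sigmaSet.1 hτ)] at hσ
    obtain ⟨σ, hσ, rfl⟩ := hσ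
    exact SVec_normPauli_mem_sector hσ

lemma vadjS_normPauli {τ : PauliLabel q} (hτ : τ ≠ 0) :
    vadjS (normPauli τ) = (Real.sqrt (2 * ((commSet (pauliForm q) τ).card : ℝ)) : ℂ)⁻¹ •
      ∑ σ ∈ commSet (pauliForm q) τ, pauliVec τ σ := by
  rw [vadjS, CSet_normPauli hτ, Set.ncard_image_of_injective _ normPauli_injective,
    Set.ncard_coe_finset, finsum_mem_image normPauli_injective.injOn, finsum_mem_coe_finset]
  rfl

lemma card_div_two_sub_two_ne_zero (hq : 2 ≤ q) :
    (Fintype.card (PauliLabel q) / 2 - 2 : ℂ) ≠ 0 := by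
  obtain ⟨k, rfl⟩ := Nat.exists_eq_add_of_le hq
  have h : (4 ^ k : ℂ) ≠ 1 / 4 := fun h => by
    have : 4 ^ k * 4 = 1 := by exact_mod_cast (eq_div_iff four_ne_zero).1 h
    omega
  rw [card_pauliLabel, pow_add]
  contrapose! h
  push_cast at h
  linear_combination h / 8

lemma VadjS_eq_eigenspace (hq : 2 ≤ q) :
    VadjS q = Module.End.eigenspace (pauliFrame q).hadamardOp (-2) := by
  have hV := card_div_two_sub_two_ne_zero hq
  rw [PairFrame.eigenspace_neg_two_eq_span (pauliForm_isAlt q) (pauliForm_nondegenerate q) hV]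
  apply le_antisymm <;> refine Submodule.span_le.2 ?_
  · rintro _ ⟨_, hτ, rfl⟩
    obtain ⟨τ, rfl⟩ := mem_sigmaHat_iff.1 hτ.1
    rw [vadjS_normPauli (normPauli_mem_sigmaSet.1 hτ)]
    exact Submodule.smul_mem _ _ (Submodule.subset_span ⟨τ, rfl⟩)
  · rintro _ ⟨τ, rfl⟩
    by_cases hτ : τ = 0
    · have hempty : commSet (pauliForm q) τ = ∅ :=
        Finset.eq_empty_of_forall_notMem fun σ hσ => (mem_commSet.1 hσ).1 hτ
      simp [hempty]
    · have hmem : vadjS (normPauli τ) ∈ VadjS q :=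
        Submodule.subset_span ⟨_, normPauli_mem_sigmaSet.2 hτ, rfl⟩
      rw [vadjS_normPauli hτ] at hmem
      refine (Submodule.smul_mem_iff _ ?_).1 hmem
      rw [← card_commSet (pauliForm_isAlt q) (pauliForm_nondegenerate q) hτ] at hV
      simpa using hV

lemma twoCopy_SVec (U σ τ : Mat q) :
    twoCopy U (SVec σ τ) = SVec (U * σ * Uᴴ) (U * τ * Uᴴ) := by
  have hkron (σ τ : Mat q) :
      (U ⊗ₖ U) * (σ ⊗ₖ τ) * (U ⊗ₖ U)ᴴ = (U * σ * Uᴴ) ⊗ₖ (U * τ * Uᴴ) := by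
    rw [Matrix.conjTranspose_kronecker, ← Matrix.mul_kronecker_mul, ← Matrix.mul_kronecker_mul]
  rw [SVec, SVec, map_smul, map_add, ← hkron, ← hkron]
  rfl

lemma hs_twoCopy {U : Mat q} (hU : U ∈ Matrix.unitaryGroup (Idx q) ℂ) (x y : BMat q) :
    hs (twoCopy U x) (twoCopy U y) = hs x y := by
  have hUU : (U ⊗ₖ U)ᴴ * (U ⊗ₖ U) = 1 := by
    rw [Matrix.conjTranspose_kronecker, ← Matrix.mul_kronecker_mul, ← Matrix.star_eq_conjTranspose,
      Matrix.mem_unitaryGroup_iff'.1 hU, Matrix.one_kronecker_one]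
  calc hs (twoCopy U x) (twoCopy U y)
      = ((U ⊗ₖ U) * (xᴴ * ((U ⊗ₖ U)ᴴ * (U ⊗ₖ U)) * y * (U ⊗ₖ U)ᴴ)).trace := by
        simp only [hs, twoCopy, LinearMap.coe_mk, AddHom.coe_mk, Matrix.conjTranspose_mul,
          Matrix.conjTranspose_conjTranspose, Matrix.mul_assoc]
    _ = (xᴴ * ((U ⊗ₖ U)ᴴ * (U ⊗ₖ U)) * y * ((U ⊗ₖ U)ᴴ * (U ⊗ₖ U))).trace := by
        rw [Matrix.trace_mul_comm, Matrix.mul_assoc]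
    _ = hs x y := by rw [hUU, Matrix.mul_one, Matrix.mul_one, hs]

variable {U : Mat q} {s : PauliLabel q → ℂ}

lemma isSymmetry_twoCopy {g : Equiv.Perm (PauliLabel q)} (h : ActsOnPaulis U g s) :
    (pauliFrame q).IsSymmetry (twoCopy U) g s where
  map_zero := h.map_zero
  form_map := h.form_map
  inner_map x y := by rw [inner_eq_hs, inner_eq_hs, hs_twoCopy h.mem_unitaryGroup]
  star_mul_self τ := by obtain hs | hs := h.sign τ <;> simp [hs]
  map_vec τ σ := by
    rw [pauliFrame_vec, pauliFrame_vec, pauliVec, twoCopy_SVec, h.conj, h.conj_nprod,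
      SVec_smul_left, SVec_smul_right, smul_smul, ← mul_assoc, h.sign_mul_self, one_mul, pauliVec]

variable (q) in
/-- The operators of the two-copy representation. -/
def twoCopyOps : Set (BMat q →ₗ[ℂ] BMat q) := twoCopy '' Cliff q

variable (q) in
lemma isFullSymmetrySet_twoCopyOps :
    (pauliFrame q).IsFullSymmetrySet (twoCopyOps q) (pauliForm_isAlt q) where
  isSymmetry := by
    rintro _ ⟨U, hU, rfl⟩
    obtain ⟨g, s, h⟩ := ActsOnPaulis.exists_of_mem_Cliff hU
    exact ⟨.ofBijective g h.injective.bijective_of_finite, s, isSymmetry_twoCopy h⟩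
  exists_sign a := ⟨_, ⟨_, (actsOnPaulis_pauli a).mem_Cliff, rfl⟩,
    isSymmetry_twoCopy (actsOnPaulis_pauli a)⟩
  exists_transvection a := ⟨_, ⟨_, (actsOnPaulis_pauliRotation a).mem_Cliff, rfl⟩, _,
    isSymmetry_twoCopy (actsOnPaulis_pauliRotation a)⟩

end TwoCopy

section Representation

open Module.End

open scoped InnerProductSpace ComplexOrder

attribute [local instance] hsNormedAddCommGroup hsInnerProductSpace

variable {q : ℕ} {μ ν : ℂ}

/-- The eigenspace, for the eigenvalue `μ`, of the Hadamard operator of the Pauli frame. Only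
`μ ≠ 0` is of interest: the kernel contains the orthogonal complement of `V_[S]`. -/
abbrev hadamardEigenspace (q : ℕ) (μ : ℂ) : Submodule ℂ (BMat q) :=
  eigenspace (pauliFrame q).hadamardOp μ

lemma isInvariant_hadamardEigenspace (hμ : μ ≠ 0) : IsInvariant q (hadamardEigenspace q μ) := by
  intro U hU x hx
  obtain ⟨g, s, h⟩ := (isFullSymmetrySet_twoCopyOps q).isSymmetry _ ⟨U, hU, rfl⟩
  exact h.map_mem_eigenspace (pauliForm_isAlt q) hμ hx

lemma carriesIrred_hadamardEigenspace (hμ : μ ≠ 0) (h : hadamardEigenspace q μ ≠ ⊥) :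
    CarriesIrred q (hadamardEigenspace q μ) :=
  ⟨h, isInvariant_hadamardEigenspace hμ, fun _ hWμ hW =>
    (isFullSymmetrySet_twoCopyOps q).eq_bot_or_eq_eigenspace (pauliForm_nondegenerate q) hμ hWμ
      (Set.forall_mem_image.2 hW)⟩

lemma hs_eq_zero_of_mem_hadamardEigenspace (hμν : μ ≠ ν) :
    ∀ x ∈ hadamardEigenspace q μ, ∀ y ∈ hadamardEigenspace q ν, hs x y = 0 := by
  intro x hx y hy
  rw [← inner_eq_hs]
  exact PairFrame.inner_eq_zero_of_mem_eigenspace (pauliForm_isAlt q) hμν hx hy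

lemma not_equivRep_hadamardEigenspace (hμ : μ ≠ 0) (hν : ν ≠ 0) (hμν : μ ≠ ν)
    (h : hadamardEigenspace q μ ≠ ⊥) :
    ¬ EquivRep q (hadamardEigenspace q μ) (hadamardEigenspace q ν) := by
  rintro ⟨L, hL, hinj, hint⟩
  have hL0 := (isFullSymmetrySet_twoCopyOps q).eq_zero_of_intertwines (pauliForm_nondegenerate q)
    hμ hν hμν (fun x hx => hL.le (Submodule.mem_map_of_mem hx)) (Set.forall_mem_image.2 hint)
  exact h ((Submodule.eq_bot_iff _).2 fun x hx => hinj x hx (hL0 x hx))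

lemma two_pow_sq_eq_card (q : ℕ) : ((2 : ℂ) ^ q) ^ 2 = Fintype.card (PauliLabel q) := by
  rw [card_pauliLabel, ← pow_mul, mul_comm, pow_mul]
  norm_num

/-- The subspace `V_[1]` of `V_[S]`, realized as the `d`-eigenspace of the Hadamard operator. -/
def V1com (q : ℕ) : Submodule ℂ (BMat q) := hadamardEigenspace q (2 ^ q)

/-- The subspace `V_[2]` of `V_[S]`, realized as the `-d`-eigenspace of the Hadamard operator. -/
def V2com (q : ℕ) : Submodule ℂ (BMat q) := hadamardEigenspace q (-2 ^ q)

lemma VScom_eq_sup (hq : 2 ≤ q) :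
    VScom q = VadjS q ⊔ V1com q ⊔ V2com q := by
  rw [VadjS_eq_eigenspace hq, ← sector_pauliFrame]
  exact PairFrame.sector_eq_sup_eigenspace (pauliForm_isAlt q) (pauliForm_nondegenerate q)
    (card_div_two_sub_two_ne_zero hq) (two_pow_sq_eq_card q)

lemma finrank_VadjS (hq : 2 ≤ q) :
    Module.finrank ℂ (VadjS q) = 4 ^ q - 1 := by
  have h := (pauliFrame q).finrank_eigenspace_neg_two (pauliForm_isAlt q)
    (pauliForm_nondegenerate q) (card_div_two_sub_two_ne_zero hq)
  rw [card_pauliLabel] at h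
  rw [VadjS_eq_eigenspace hq, ← Nat.cast_inj (R := ℂ), h, Nat.cast_pred (by positivity)]

lemma finrank_V1com (hq : 2 ≤ q) :
    Module.finrank ℂ (V1com q) =
      (2 ^ (2 * q) - 1) * (2 ^ q / 2 * (2 ^ q / 2 + 1) / 2 - 1) := by
  have h := (pauliFrame q).finrank_eigenspace_of_sq_eq_card (pauliForm_isAlt q)
    (pauliForm_nondegenerate q) (card_div_two_sub_two_ne_zero hq) (two_pow_sq_eq_card q)
  obtain ⟨k, rfl⟩ := Nat.exists_eq_add_of_le' hq
  have hhalf : 2 ^ (k + 2) / 2 = 2 * 2 ^ k := by rw [pow_add]; omega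
  rw [V1com, hhalf, mul_assoc, Nat.mul_div_cancel_left _ two_pos, ← Nat.cast_inj (R := ℂ), h,
    Nat.cast_mul, Nat.cast_pred (by positivity), Nat.cast_pred (by positivity)]
  push_cast
  ring

lemma finrank_V2com (hq : 2 ≤ q) :
    Module.finrank ℂ (V2com q) =
      (2 ^ (2 * q) - 1) * (2 ^ q / 2 * (2 ^ q / 2 - 1) / 2 - 1) := by
  have h := (pauliFrame q).finrank_eigenspace_of_sq_eq_card (pauliForm_isAlt q)
    (pauliForm_nondegenerate q) (card_div_two_sub_two_ne_zero hq)
    ((neg_sq _).trans (two_pow_sq_eq_card q))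
  obtain ⟨k, rfl⟩ := Nat.exists_eq_add_of_le' hq
  have hk : 0 < 2 ^ k := by positivity
  have hhalf : 2 ^ (k + 2) / 2 = 2 * 2 ^ k := by rw [pow_add]; omega
  rw [V2com, hhalf, mul_assoc, Nat.mul_div_cancel_left _ two_pos, ← Nat.cast_inj (R := ℂ), h,
    Nat.cast_mul, Nat.cast_pred (by positivity), Nat.cast_pred (Nat.mul_pos hk (by omega)),
    Nat.cast_mul, Nat.cast_pred (by omega)]
  push_cast
  ring

lemma VadjS_ne_bot (hq : 2 ≤ q) : VadjS q ≠ ⊥ := by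
  apply Submodule.one_le_finrank_iff.1
  rw [finrank_VadjS hq]
  exact Nat.sub_pos_of_lt (Nat.one_lt_pow (by omega) (by norm_num))

lemma V1com_ne_bot (hq : 2 ≤ q) : V1com q ≠ ⊥ := by
  apply Submodule.one_le_finrank_iff.1
  rw [finrank_V1com hq]
  have hpow : 1 < 2 ^ (2 * q) := Nat.one_lt_two_pow (by omega)
  have hhalf : 2 ≤ 2 ^ q / 2 := by
    have := Nat.pow_le_pow_right two_pos hq
    omega
  have : 2 * (2 + 1) ≤ 2 ^ q / 2 * (2 ^ q / 2 + 1) := by gcongr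
  exact Nat.mul_pos (by omega) (by omega)

lemma V2com_ne_bot (hq : 3 ≤ q) : V2com q ≠ ⊥ := by
  apply Submodule.one_le_finrank_iff.1
  rw [finrank_V2com (by omega)]
  have hpow : 1 < 2 ^ (2 * q) := Nat.one_lt_two_pow (by omega)
  have hhalf : 4 ≤ 2 ^ q / 2 := by
    have := Nat.pow_le_pow_right two_pos hq
    omega
  have : 4 * 3 ≤ 2 ^ q / 2 * (2 ^ q / 2 - 1) := Nat.mul_le_mul hhalf (by omega)
  exact Nat.mul_pos (by omega) (by omega)

lemma V2com_two_eq_bot : V2com 2 = ⊥ :=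
  Submodule.finrank_eq_zero.1 (finrank_V2com le_rfl)

lemma neg_two_ne_of_sq_eq_card (hq : 2 ≤ q) (h : ν ^ 2 = Fintype.card (PauliLabel q)) :
    -2 ≠ ν := by
  rintro rfl
  rw [card_pauliLabel, neg_sq] at h
  have h4 : 2 ^ 2 = 4 ^ q := by exact_mod_cast h
  have := Nat.pow_le_pow_right four_pos hq
  omega

lemma neg_two_ne_two_pow (hq : 2 ≤ q) : (-2 : ℂ) ≠ 2 ^ q :=
  neg_two_ne_of_sq_eq_card hq (two_pow_sq_eq_card q)

lemma neg_two_ne_neg_two_pow (hq : 2 ≤ q) : (-2 : ℂ) ≠ -2 ^ q :=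
  neg_two_ne_of_sq_eq_card hq ((neg_sq _).trans (two_pow_sq_eq_card q))

lemma carriesIrred_VadjS (hq : 2 ≤ q) : CarriesIrred q (VadjS q) := by
  have h := VadjS_ne_bot hq
  rw [VadjS_eq_eigenspace hq] at h ⊢
  exact carriesIrred_hadamardEigenspace (neg_ne_zero.2 two_ne_zero) h

lemma carriesIrred_V1com (hq : 2 ≤ q) : CarriesIrred q (V1com q) :=
  carriesIrred_hadamardEigenspace (pow_ne_zero q two_ne_zero) (V1com_ne_bot hq)

lemma carriesIrred_V2com (hq : 3 ≤ q) : CarriesIrred q (V2com q) :=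
  carriesIrred_hadamardEigenspace (neg_ne_zero.2 (pow_ne_zero q two_ne_zero)) (V2com_ne_bot hq)

lemma hs_VadjS_V1com (hq : 2 ≤ q) : ∀ x ∈ VadjS q, ∀ y ∈ V1com q, hs x y = 0 := by
  rw [VadjS_eq_eigenspace hq]
  exact hs_eq_zero_of_mem_hadamardEigenspace (neg_two_ne_two_pow hq)

lemma hs_VadjS_V2com (hq : 2 ≤ q) : ∀ x ∈ VadjS q, ∀ y ∈ V2com q, hs x y = 0 := by
  rw [VadjS_eq_eigenspace hq]
  exact hs_eq_zero_of_mem_hadamardEigenspace (neg_two_ne_neg_two_pow hq)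

lemma hs_V1com_V2com : ∀ x ∈ V1com q, ∀ y ∈ V2com q, hs x y = 0 :=
  hs_eq_zero_of_mem_hadamardEigenspace (self_ne_neg.2 (pow_ne_zero q two_ne_zero))

lemma not_equivRep_VadjS_V1com (hq : 2 ≤ q) : ¬ EquivRep q (VadjS q) (V1com q) := by
  have h := VadjS_ne_bot hq
  rw [VadjS_eq_eigenspace hq] at h ⊢
  exact not_equivRep_hadamardEigenspace (neg_ne_zero.2 two_ne_zero) (pow_ne_zero q two_ne_zero)
    (neg_two_ne_two_pow hq) h

lemma not_equivRep_VadjS_V2com (hq : 2 ≤ q) : ¬ EquivRep q (VadjS q) (V2com q) := by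
  have h := VadjS_ne_bot hq
  rw [VadjS_eq_eigenspace hq] at h ⊢
  exact not_equivRep_hadamardEigenspace (neg_ne_zero.2 two_ne_zero)
    (neg_ne_zero.2 (pow_ne_zero q two_ne_zero)) (neg_two_ne_neg_two_pow hq) h

lemma not_equivRep_V1com_V2com (hq : 2 ≤ q) : ¬ EquivRep q (V1com q) (V2com q) :=
  not_equivRep_hadamardEigenspace (pow_ne_zero q two_ne_zero)
    (neg_ne_zero.2 (pow_ne_zero q two_ne_zero)) (self_ne_neg.2 (pow_ne_zero q two_ne_zero))
    (V1com_ne_bot hq)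

lemma VScom_one_eq_bot : VScom 1 = ⊥ := by
  have hempty (τ : PauliLabel 1) : commSet (pauliForm 1) τ = ∅ := by
    by_cases hτ : τ = 0
    · exact Finset.eq_empty_of_forall_notMem fun σ hσ => (mem_commSet.1 hσ).1 hτ
    · have h := card_commSet (pauliForm_isAlt 1) (pauliForm_nondegenerate 1) hτ
      rw [card_pauliLabel] at h
      norm_num at h
      exact h
  rw [← sector_pauliFrame, PairFrame.sector, Submodule.span_eq_bot]
  rintro _ ⟨τ, σ, hσ, rfl⟩
  simp [hempty] at hσ

end Representation

/-- symmetric commuting sector: for `q ≥ 3` there are invariant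
irreducible `V_[1]`, `V_[2]` with the stated dimensions such that
`V_[S] = V_[adj] ⊕ V_[1] ⊕ V_[2]` orthogonally, the three pieces being pairwise
inequivalent; for `q = 2` the same with `V_[2] = 0`; for `q = 1`, `V_[S] = 0`. -/
theorem statement15 (q : ℕ) (hq : 1 ≤ q) :
    (3 ≤ q →
      ∃ V1s V2s : Submodule ℂ (BMat q),
        IsInvariant q V1s ∧ IsInvariant q V2s ∧
        CarriesIrred q V1s ∧ CarriesIrred q V2s ∧
        CarriesIrred q (VadjS q) ∧
        Module.finrank ℂ ↥V1s =
          (2 ^ (2 * q) - 1) * (2 ^ q / 2 * (2 ^ q / 2 + 1) / 2 - 1) ∧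
        Module.finrank ℂ ↥V2s =
          (2 ^ (2 * q) - 1) * (2 ^ q / 2 * (2 ^ q / 2 - 1) / 2 - 1) ∧
        VScom q = VadjS q ⊔ V1s ⊔ V2s ∧
        (∀ x ∈ VadjS q, ∀ y ∈ V1s, hs x y = 0) ∧
        (∀ x ∈ VadjS q, ∀ y ∈ V2s, hs x y = 0) ∧
        (∀ x ∈ V1s, ∀ y ∈ V2s, hs x y = 0) ∧
        ¬ EquivRep q (VadjS q) V1s ∧ ¬ EquivRep q (VadjS q) V2s ∧
        ¬ EquivRep q V1s V2s) ∧
    (q = 2 →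
      ∃ V1s : Submodule ℂ (BMat q),
        IsInvariant q V1s ∧ CarriesIrred q V1s ∧ CarriesIrred q (VadjS q) ∧
        Module.finrank ℂ ↥V1s =
          (2 ^ (2 * q) - 1) * (2 ^ q / 2 * (2 ^ q / 2 + 1) / 2 - 1) ∧
        VScom q = VadjS q ⊔ V1s ∧
        (∀ x ∈ VadjS q, ∀ y ∈ V1s, hs x y = 0) ∧
        ¬ EquivRep q (VadjS q) V1s) ∧
    (q = 1 → VScom q = ⊥) := by
  refine ⟨fun hq3 => ?_, ?_, ?_⟩
  · have hq2 : 2 ≤ q := by omega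
    have hirr1 := carriesIrred_V1com hq2
    have hirr2 := carriesIrred_V2com hq3
    exact ⟨V1com q, V2com q, hirr1.2.1, hirr2.2.1, hirr1, hirr2, carriesIrred_VadjS hq2,
      finrank_V1com hq2, finrank_V2com hq2, VScom_eq_sup hq2,
      hs_VadjS_V1com hq2, hs_VadjS_V2com hq2, hs_V1com_V2com,
      not_equivRep_VadjS_V1com hq2, not_equivRep_VadjS_V2com hq2, not_equivRep_V1com_V2com hq2⟩
  · rintro rfl
    have hirr := carriesIrred_V1com le_rfl
    have hdecomp := VScom_eq_sup le_rfl
    rw [V2com_two_eq_bot, sup_bot_eq] at hdecomp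
    exact ⟨V1com 2, hirr.2.1, hirr, carriesIrred_VadjS le_rfl, finrank_V1com le_rfl, hdecomp,
      hs_VadjS_V1com le_rfl, not_equivRep_VadjS_V1com le_rfl⟩
  · rintro rfl
    exact VScom_one_eq_bot

end CliffordPaper
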